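/- arXiv:1406.1719 — 6 statements merged into one kernel-verified Lean document; each statement's English description precedes it below -/
import Mathlib

section
/- For every integer l ≥ 2 there exists a constant C = C(l), depending only on l, with the following property. Let g : ℝ → ℝ be l times continuously differentiable on [0,1], with |g^{(i)}(x)| ≤ 1 for all x ∈ [0,1] and all 0 ≤ i ≤ l−1, and with 0 ≤ g^{(l)}(x) ≤ 1/x for all x ∈ (0,1]. Define ĝ(t) = g(t²). Then |ĝ^{(i)}(t)| ≤ C for all t ∈ [0,1] and all 0 ≤ i ≤ l. -/
/-!
By induction on `i`, the derivatives of `ĝ(t) = g(t²)` have the form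
`ĝ⁽ⁱ⁾(t) = ∑_{k ≤ i} P_{i,k}(t) g⁽ᵏ⁾(t²)` with universal polynomials `P_{i,k}` satisfying
`P_{i+1,k} = P_{i,k}' + 2t P_{i,k-1}`, and the leading one is `P_{i,i}(t) = (2t)ⁱ`
(`iteratedDerivWithin_comp_sq`, `sqPoly_self`). For `k ≤ l - 1` the factor `g⁽ᵏ⁾(t²)` is bounded
by `1` and `P_{i,k}` is bounded on `[0,1]`. The only other term is `i = k = l`, where
`|(2t)ˡ g⁽ˡ⁾(t²)| ≤ 2ˡ tˡ / t² ≤ 2ˡ` for `t > 0` because `l ≥ 2`, and the term vanishes at `t = 0`.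
-/

open Set

/-- The universal polynomials `P_{i,k}` such that the `i`-th derivative of `t ↦ g (t ^ 2)` is
`∑ k ≤ i, P_{i,k}(t) * g⁽ᵏ⁾(t ^ 2)`. -/
noncomputable def sqPoly : ℕ → ℕ → Polynomial ℝ
  | 0, 0 => 1
  | 0, _ + 1 => 0
  | i + 1, 0 => (sqPoly i 0).derivative
  | i + 1, k + 1 => (sqPoly i (k + 1)).derivative + 2 * Polynomial.X * sqPoly i k

lemma sqPoly_eq_zero : ∀ i k : ℕ, i < k → sqPoly i k = 0
  | 0, 0, h => by omega
  | 0, _ + 1, _ => by simp [sqPoly]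
  | _ + 1, 0, h => by omega
  | i + 1, k + 1, h => by
    simp [sqPoly, sqPoly_eq_zero i (k + 1) (by omega), sqPoly_eq_zero i k (by omega)]

lemma sqPoly_self (i : ℕ) : sqPoly i i = (2 * Polynomial.X) ^ i := by
  induction i with
  | zero => simp [sqPoly]
  | succ i ih =>
    rw [sqPoly, sqPoly_eq_zero i (i + 1) (by omega), ih, Polynomial.derivative_zero, zero_add,
      pow_succ']

lemma sq_mem_Icc {t : ℝ} (ht : t ∈ Icc (0:ℝ) 1) : t ^ 2 ∈ Icc (0:ℝ) 1 :=
  ⟨sq_nonneg t, pow_le_one₀ ht.1 ht.2⟩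

lemma hasDerivWithinAt_iteratedDerivWithin_sq {l : ℕ} {g : ℝ → ℝ}
    (hg : ContDiffOn ℝ l g (Icc 0 1)) {k : ℕ} (hk : k < l) {t : ℝ} (ht : t ∈ Icc (0:ℝ) 1) :
    HasDerivWithinAt (fun s => iteratedDerivWithin k g (Icc 0 1) (s ^ 2))
      (iteratedDerivWithin (k + 1) g (Icc 0 1) (t ^ 2) * (2 * t)) (Icc 0 1) t := by
  have h1 : HasDerivWithinAt (iteratedDerivWithin k g (Icc 0 1))
      (iteratedDerivWithin (k + 1) g (Icc 0 1) (t ^ 2)) (Icc 0 1) (t ^ 2) := by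
    rw [iteratedDerivWithin_succ]
    exact (hg.differentiableOn_iteratedDerivWithin (by exact_mod_cast hk)
      (uniqueDiffOn_Icc zero_lt_one) _ (sq_mem_Icc ht)).hasDerivWithinAt
  have h2 : HasDerivWithinAt (fun s : ℝ => s ^ 2) (2 * t) (Icc 0 1) t := by
    simpa using (hasDerivAt_pow 2 t).hasDerivWithinAt (s := Icc (0:ℝ) 1)
  exact HasDerivWithinAt.comp (h := fun s : ℝ => s ^ 2) t h1 h2 fun s hs => sq_mem_Icc hs

lemma iteratedDerivWithin_comp_sq {l : ℕ} {g : ℝ → ℝ} (hg : ContDiffOn ℝ l g (Icc 0 1)) :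
    ∀ i ≤ l, ∀ t ∈ Icc (0:ℝ) 1,
      iteratedDerivWithin i (fun t => g (t ^ 2)) (Icc 0 1) t =
        ∑ k ∈ Finset.range (i + 1),
          (sqPoly i k).eval t * iteratedDerivWithin k g (Icc 0 1) (t ^ 2) := by
  intro i
  induction i with
  | zero => intro _ t _; simp [sqPoly]
  | succ i ih =>
    intro hi t ht
    rw [iteratedDerivWithin_succ, derivWithin_congr (ih (by omega)) (ih (by omega) t ht)]
    have hsum : HasDerivWithinAt (fun s => ∑ k ∈ Finset.range (i + 1),
          (sqPoly i k).eval s * iteratedDerivWithin k g (Icc 0 1) (s ^ 2))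
        (∑ k ∈ Finset.range (i + 1),
          ((sqPoly i k).derivative.eval t * iteratedDerivWithin k g (Icc 0 1) (t ^ 2) +
            (sqPoly i k).eval t *
              (iteratedDerivWithin (k + 1) g (Icc 0 1) (t ^ 2) * (2 * t)))) (Icc 0 1) t := by
      refine HasDerivWithinAt.fun_sum fun k hk => ?_
      have hk' := Finset.mem_range.1 hk
      exact ((sqPoly i k).hasDerivAt t).hasDerivWithinAt.mul
        (hasDerivWithinAt_iteratedDerivWithin_sq hg (by omega) ht)
    rw [hsum.derivWithin (uniqueDiffOn_Icc zero_lt_one t ht), Finset.sum_add_distrib,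
      Finset.sum_range_succ' _ (i + 1)]
    simp only [sqPoly, Polynomial.eval_add, Polynomial.eval_mul, Polynomial.eval_X,
      Polynomial.eval_ofNat, add_mul, Finset.sum_add_distrib]
    -- The sums of the derivative terms on both sides agree up to the term `k = i + 1`, which is zero.
    rw [Finset.sum_range_succ' (fun k =>
        (sqPoly i k).derivative.eval t * iteratedDerivWithin k g (Icc 0 1) (t ^ 2)) i,
      Finset.sum_range_succ (fun k => (sqPoly i (k + 1)).derivative.eval t *
        iteratedDerivWithin (k + 1) g (Icc 0 1) (t ^ 2)) i,
      sqPoly_eq_zero i (i + 1) (by omega)]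
    have : ∀ k, (sqPoly i k).eval t *
        (iteratedDerivWithin (k + 1) g (Icc 0 1) (t ^ 2) * (2 * t)) =
        2 * t * (sqPoly i k).eval t * iteratedDerivWithin (k + 1) g (Icc 0 1) (t ^ 2) :=
      fun k => by ring
    simp only [this, Polynomial.derivative_zero, Polynomial.eval_zero, zero_mul]
    ring

lemma exists_bound_sqPoly (i k : ℕ) :
    ∃ B : ℝ, ∀ t ∈ Icc (0:ℝ) 1, |(sqPoly i k).eval t| ≤ B :=
  isCompact_Icc.exists_bound_of_continuousOn (sqPoly i k).continuous.continuousOn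

/-- The top-order term: the factor `t ^ l` with `l ≥ 2` absorbs the singularity `1 / t ^ 2`. -/
lemma abs_two_mul_pow_mul_le {l : ℕ} (hl : 2 ≤ l) {t y : ℝ} (ht : t ∈ Icc (0:ℝ) 1)
    (hy : 0 < t → 0 ≤ y ∧ y ≤ 1 / t ^ 2) : |(2 * t) ^ l * y| ≤ 2 ^ l := by
  rcases ht.1.eq_or_lt with rfl | h0
  · simp [show l ≠ 0 by omega]
  · obtain ⟨hy0, hy1⟩ := hy h0
    rw [abs_of_nonneg (by positivity), mul_pow, mul_assoc]
    refine mul_le_of_le_one_right (by positivity) ?_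
    calc t ^ l * y ≤ t ^ 2 * (1 / t ^ 2) :=
          mul_le_mul (pow_le_pow_of_le_one ht.1 ht.2 hl) hy1 hy0 (by positivity)
      _ = 1 := by field_simp

/-- For every integer `l ≥ 2` there is a constant `C = C(l)` such that: if `g` is `l` times
continuously differentiable on `[0,1]`, `|g⁽ⁱ⁾| ≤ 1` on `[0,1]` for `0 ≤ i ≤ l-1`, and
`0 ≤ g⁽ˡ⁾(x) ≤ 1/x` on `(0,1]`, then `ĝ(t) = g(t²)` satisfies `|ĝ⁽ⁱ⁾(t)| ≤ C` on `[0,1]`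
for all `0 ≤ i ≤ l`. -/
theorem stmt1 (l : ℕ) (hl : 2 ≤ l) :
    ∃ C : ℝ, ∀ g : ℝ → ℝ,
      ContDiffOn ℝ l g (Icc 0 1) →
      (∀ i ≤ l - 1, ∀ x ∈ Icc (0:ℝ) 1, |iteratedDerivWithin i g (Icc 0 1) x| ≤ 1) →
      (∀ x ∈ Ioc (0:ℝ) 1, 0 ≤ iteratedDerivWithin l g (Icc 0 1) x ∧
        iteratedDerivWithin l g (Icc 0 1) x ≤ 1 / x) →
      ∀ i ≤ l, ∀ t ∈ Icc (0:ℝ) 1,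
        |iteratedDerivWithin i (fun t => g (t ^ 2)) (Icc 0 1) t| ≤ C := by
  choose B hB using exists_bound_sqPoly
  have hB0 : ∀ i k, 0 ≤ B i k := fun i k =>
    (abs_nonneg _).trans (hB i k 0 ⟨le_rfl, zero_le_one⟩)
  refine ⟨∑ i ∈ Finset.range (l + 1), ∑ k ∈ Finset.range (i + 1), (B i k + 2 ^ l), ?_⟩
  intro g hg hlow htop i hi t ht
  have hterm : ∀ k ∈ Finset.range (i + 1),
      |(sqPoly i k).eval t * iteratedDerivWithin k g (Icc 0 1) (t ^ 2)| ≤ B i k + 2 ^ l := by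
    intro k hk
    have hk' := Finset.mem_range.1 hk
    by_cases hkl : k ≤ l - 1
    · rw [abs_mul]
      have := mul_le_mul (hB i k t ht) (hlow k hkl _ (sq_mem_Icc ht)) (abs_nonneg _) (hB0 i k)
      have : (0:ℝ) ≤ 2 ^ l := by positivity
      linarith
    · obtain rfl : k = l := by omega
      obtain rfl : i = k := by omega
      have := abs_two_mul_pow_mul_le hl ht
        (fun h0 => htop (t ^ 2) ⟨by positivity, (sq_mem_Icc ht).2⟩)
      rw [sqPoly_self]
      simp only [Polynomial.eval_pow, Polynomial.eval_mul, Polynomial.eval_X,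
        Polynomial.eval_ofNat]
      linarith [hB0 i i]
  rw [iteratedDerivWithin_comp_sq hg i hi t ht]
  refine ((Finset.abs_sum_le_sum_abs _ _).trans (Finset.sum_le_sum hterm)).trans ?_
  exact Finset.single_le_sum
    (f := fun i => ∑ k ∈ Finset.range (i + 1), (B i k + 2 ^ l))
    (fun j _ => Finset.sum_nonneg fun k _ => add_nonneg (hB0 j k) (by positivity))
    (Finset.mem_range.2 (by omega))
end

section
/- For all positive integers k and d there exists a constant M = M(k,d), depending only on k and d, with the following property. Let g be a real algebraic function of degree d on I = [−1,1] satisfying 0 ≤ g(x) ≤ 1 and |g'(x)| ≤ 1 for all x ∈ I. Then there exist an integer N ≤ M, closed subintervals Δ₁,…,Δ_N of I with pairwise disjoint interiors whose union is I, and maps ψ_j : I → ℝ with ψ_j(I) = Δ_j for j = 1,…,N, such that each ψ_j is a C^k-chart and each composition g ∘ ψ_j is a C^k-chart. -/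
/-!
Why the theorem holds. Cut `[-1,1]` at all interior zeros of those derivatives `g⁽ʲ⁾`,
`2 ≤ j ≤ k + 1`, that do not vanish identically. Two facts give a bound depending only on `k, d`.

*The number of cuts is bounded* (`exists_zeros_iteratedDeriv`). Replace the annihilating polynomial
by a polynomial `P` of no larger degree with `P_y(x, g(x)) ≢ 0`. Implicit differentiation gives
`P_y(x,g)^(2j) · g⁽ʲ⁾ = Q_j(x,g)` with `deg Q_j ≤ 1 + 2dj`, so it suffices to bound the number of
zeros of a function `F = Q(x, g(x)) ≢ 0`. A dimension count produces a nontrivial relation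
`∑ r_j(x) F(x)^j = 0` with `r_j` univariate polynomials of bounded degree; cancelling powers of the
analytic function `F` makes the lowest nonzero `r_j` vanish at every zero of `F`.

*Each gap needs a bounded number of charts* (`gapChain`). Between consecutive cuts every `g⁽ʲ⁾`,
`2 ≤ j ≤ k + 1`, has constant sign, so each `|g⁽ʲ⁾|` with `2 ≤ j ≤ k` is monotone, and the mean
value theorem together with `|g'| ≤ 1` yields `|g⁽ʲ⁾(x)| ≤ C · dist(x, ends)^(1-j)`
(`deriv_growth`). Halve the gap and substitute `x = e + L u^k`, `u ∈ [0,1]`, with `e` the end of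
the gap lying in that half: the chain rule then bounds the first `k` derivatives in `u` of both
`x` and `g(x)`. Cutting `[0,1]` into `K` equal parts and rescaling each to `[-1,1]` divides the
`n`-th derivative by `(2K)^n`, which makes all of them at most `1`.
-/

open Set

/-- A real algebraic function of degree `d` on `[-1,1]`: a real-analytic function annihilated by
a nonzero bivariate real polynomial of total degree at most `d`. -/
def IsAlgebraicFunOnI (d : ℕ) (g : ℝ → ℝ) : Prop :=
  AnalyticOnNhd ℝ g (Icc (-1) 1) ∧
  ∃ P : MvPolynomial (Fin 2) ℝ, P ≠ 0 ∧ P.totalDegree ≤ d ∧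
    ∀ x ∈ Icc (-1:ℝ) 1, MvPolynomial.eval ![x, g x] P = 0

/-- A `C^k`-chart: a `C^k` map `ψ : [-1,1] → ℝ` with `|ψ(x) - ψ(0)| ≤ 1` and
`|ψ⁽ⁱ⁾(x)| ≤ 1` on `[-1,1]` for `1 ≤ i ≤ k`. -/
def IsCkChart (k : ℕ) (ψ : ℝ → ℝ) : Prop :=
  ContDiffOn ℝ k ψ (Icc (-1) 1) ∧
  (∀ x ∈ Icc (-1:ℝ) 1, |ψ x - ψ 0| ≤ 1) ∧
  ∀ i : ℕ, 1 ≤ i → i ≤ k → ∀ x ∈ Icc (-1:ℝ) 1,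
    |iteratedDerivWithin i ψ (Icc (-1) 1) x| ≤ 1

/-! ### Derivative bounds for compositions -/

lemma iteratedDeriv_comp_mul_left' (f : ℝ → ℝ) (c : ℝ) (n : ℕ) :
    iteratedDeriv n (fun x => f (c * x)) = fun x => c ^ n * iteratedDeriv n f (c * x) := by
  induction n with
  | zero => simp
  | succ n ih =>
    funext x
    rw [iteratedDeriv_succ, ih, deriv_const_mul_field,
      deriv_comp_mul_left c (iteratedDeriv n f) x, iteratedDeriv_succ, smul_eq_mul]
    ring

lemma iteratedDeriv_sub_const' (f : ℝ → ℝ) (c : ℝ) {n : ℕ} (hn : 1 ≤ n) :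
    iteratedDeriv n (fun x => f x - c) = iteratedDeriv n f := by
  obtain ⟨m, rfl⟩ : ∃ m, n = m + 1 := ⟨n - 1, by omega⟩
  rw [iteratedDeriv_succ', iteratedDeriv_succ']
  congr 1
  funext x
  exact deriv_sub_const _

/-- Scaled chain-rule bound: if the derivatives of `g` at `f x` are at most `C ρ^(-i)` and those of
`f` at `x` at most `ρ D^i`, then the length `ρ` disappears from the bound for `g ∘ f`. -/
lemma iteratedDeriv_comp_bound {g f : ℝ → ℝ} {x ρ C D : ℝ} {n : ℕ} (hn : 1 ≤ n)
    (hg : AnalyticAt ℝ g (f x)) (hf : ContDiff ℝ n f) (hρ : 0 < ρ) (hC0 : 0 ≤ C)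
    (hC : ∀ i, 1 ≤ i → i ≤ n → |iteratedDeriv i g (f x)| * ρ ^ i ≤ C)
    (hD : ∀ i, 1 ≤ i → i ≤ n → |iteratedDeriv i f x| ≤ ρ * D ^ i) :
    |iteratedDeriv n (g ∘ f) x| ≤ n.factorial * C * D ^ n := by
  set G : ℝ → ℝ := fun y => g (ρ * y) - g (f x) with hG
  set F : ℝ → ℝ := fun y => ρ⁻¹ * f y with hF
  have hGF : G ∘ F = fun y => (g ∘ f) y - g (f x) := by
    funext y
    simp [hG, hF, hρ.ne']
  have hρF : ∀ y, ρ * F y = f y := fun y => by simp [hF, hρ.ne']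
  set t : Set ℝ := {y | AnalyticAt ℝ G y} with ht
  have hto : IsOpen t := isOpen_analyticAt ℝ G
  have hFc : ContDiff ℝ n F := contDiff_const.mul hf
  have hxt : F x ∈ t := by
    change AnalyticAt ℝ G (F x)
    apply AnalyticAt.sub _ analyticAt_const
    have h1 : AnalyticAt ℝ g (ρ * F x) := by rwa [hρF]
    exact h1.fun_comp (f := fun y => ρ * y) (analyticAt_const.mul analyticAt_id)
  have hso : IsOpen (F ⁻¹' t) := hto.preimage hFc.continuous
  have key := norm_iteratedFDerivWithin_comp_le (𝕜 := ℝ) (g := G) (f := F) (n := n)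
    (s := F ⁻¹' t) (t := t) (x := x) (N := n) (C := C) (D := D)
    (fun y hy => (AnalyticAt.contDiffAt hy).contDiffWithinAt) hFc.contDiffOn le_rfl
    hto.uniqueDiffOn hso.uniqueDiffOn (fun y hy => hy) hxt ?_ ?_
  · rw [norm_iteratedFDerivWithin_eq_norm_iteratedDerivWithin,
      iteratedDerivWithin_of_isOpen hso hxt, hGF, iteratedDeriv_sub_const' _ _ hn] at key
    exact key
  · intro i hi
    rw [norm_iteratedFDerivWithin_eq_norm_iteratedDerivWithin,
      iteratedDerivWithin_of_isOpen hto hxt, Real.norm_eq_abs]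
    rcases Nat.eq_zero_or_pos i with rfl | hi0
    · simpa [hG, hρF] using hC0
    · rw [hG, iteratedDeriv_sub_const' _ _ hi0, iteratedDeriv_comp_mul_left', abs_mul,
        hρF, abs_of_pos (pow_pos hρ i), mul_comm]
      exact hC i hi0 hi
  · intro i hi hin
    rw [norm_iteratedFDerivWithin_eq_norm_iteratedDerivWithin,
      iteratedDerivWithin_of_isOpen hso hxt, Real.norm_eq_abs, hF, iteratedDeriv_const_mul_field,
      abs_mul, abs_of_pos (inv_pos.2 hρ), inv_mul_le_iff₀ hρ]
    exact hD i hi hin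

lemma iteratedDeriv_powChart (e L α β : ℝ) (k : ℕ) {n : ℕ} (hn : 1 ≤ n) (s : ℝ) :
    iteratedDeriv n (fun s => e + L * (α * (β + s)) ^ k) s =
      L * (α ^ n * (k.descFactorial n * (α * (β + s)) ^ (k - n))) := by
  have h0 : (fun s => e + L * (α * (β + s)) ^ k)
      = fun s => (fun s => L * (α * (β + s)) ^ k) s - (-e) := by funext s; ring
  rw [h0, iteratedDeriv_sub_const' _ _ hn, iteratedDeriv_const_mul_field]
  congr 1
  have h1 := congrFun (iteratedDeriv_comp_const_add n (fun z : ℝ => (α * z) ^ k) β) s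
  have h2 := congrFun (iteratedDeriv_comp_mul_left' (fun z : ℝ => z ^ k) α n) (β + s)
  rw [h1, h2, iteratedDeriv_pow]

/-! ### Growth of derivatives of constant sign -/

/-- If `|g'| ≤ 1` on `[a,b]` and the derivatives of orders `2, …, k + 1` have constant sign on
`(a,b)`, then `|g⁽ʲ⁺¹⁾(x)| ≤ 2^(j(j+1)) R^(-j)` whenever `[x - R, x + R] ⊆ [a,b]`: since
`|g⁽ʲ⁺¹⁾|` is monotone, its value at `x` is at most its mean over the half of
`[x - R/2, x + R/2]` on which it is larger, and that mean is bounded through `g⁽ʲ⁾`. -/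
lemma deriv_growth {g : ℝ → ℝ} {a b : ℝ} (k : ℕ)
    (hg : AnalyticOnNhd ℝ g (Icc a b))
    (h1 : ∀ x ∈ Icc a b, |deriv g x| ≤ 1)
    (hs : ∀ j, 2 ≤ j → j ≤ k + 1 → (∀ x ∈ Ioo a b, 0 ≤ iteratedDeriv j g x) ∨
      (∀ x ∈ Ioo a b, iteratedDeriv j g x ≤ 0)) :
    ∀ j, j + 1 ≤ k → ∀ x R, 0 < R → a ≤ x - R → x + R ≤ b →
      |iteratedDeriv (j + 1) g x| * R ^ j ≤ 2 ^ (j * (j + 1)) := by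
  have hd : ∀ j, ∀ x ∈ Icc a b, HasDerivAt (iteratedDeriv j g) (iteratedDeriv (j + 1) g x) x := by
    intro j x hx
    have : AnalyticAt ℝ (iteratedDeriv j g) x := by
      rw [iteratedDeriv_eq_iterate]; exact (hg x hx).iterated_deriv j
    rw [iteratedDeriv_succ]
    exact this.differentiableAt.hasDerivAt
  intro j
  induction j with
  | zero =>
    intro _ x R hR hxa hxb
    simpa [iteratedDeriv_one] using h1 x ⟨by linarith, by linarith⟩
  | succ j ih =>
    intro hj x R hR hxa hxb
    have hIoo : ∀ y, x - R < y → y < x + R → y ∈ Ioo a b := fun y h h' => ⟨by linarith, by linarith⟩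
    -- `|g^{(j+2)}|` is monotone on `(a, b)`
    have hmono : (∀ y ∈ Ioo a b, ∀ z ∈ Ioo a b, y ≤ z →
          |iteratedDeriv (j + 2) g y| ≤ |iteratedDeriv (j + 2) g z|) ∨
        (∀ y ∈ Ioo a b, ∀ z ∈ Ioo a b, y ≤ z →
          |iteratedDeriv (j + 2) g z| ≤ |iteratedDeriv (j + 2) g y|) := by
      have hcont : ContinuousOn (iteratedDeriv (j + 2) g) (Ioo a b) := fun y hy =>
        (hd (j + 2) y (Ioo_subset_Icc_self hy)).continuousAt.continuousWithinAt
      have hm : MonotoneOn (iteratedDeriv (j + 2) g) (Ioo a b) ∨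
          AntitoneOn (iteratedDeriv (j + 2) g) (Ioo a b) := by
        rcases hs (j + 3) (by omega) (by omega) with h | h
        · left
          refine monotoneOn_of_deriv_nonneg (convex_Ioo a b) hcont ?_ ?_
          · rw [interior_Ioo]
            exact fun y hy =>
              (hd _ y (Ioo_subset_Icc_self hy)).differentiableAt.differentiableWithinAt
          · rw [interior_Ioo]
            intro y hy
            rw [(hd _ y (Ioo_subset_Icc_self hy)).deriv]
            exact h y hy
        · right
          refine antitoneOn_of_deriv_nonpos (convex_Ioo a b) hcont ?_ ?_
          · rw [interior_Ioo]
            exact fun y hy =>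
              (hd _ y (Ioo_subset_Icc_self hy)).differentiableAt.differentiableWithinAt
          · rw [interior_Ioo]
            intro y hy
            rw [(hd _ y (Ioo_subset_Icc_self hy)).deriv]
            exact h y hy
      rcases hs (j + 2) (by omega) (by omega) with h | h <;> rcases hm with hm | hm
      · left; intro y hy z hz hyz
        rw [abs_of_nonneg (h y hy), abs_of_nonneg (h z hz)]; exact hm hy hz hyz
      · right; intro y hy z hz hyz
        rw [abs_of_nonneg (h y hy), abs_of_nonneg (h z hz)]; exact hm hy hz hyz
      · right; intro y hy z hz hyz
        rw [abs_of_nonpos (h y hy), abs_of_nonpos (h z hz)]; exact neg_le_neg (hm hy hz hyz)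
      · left; intro y hy z hz hyz
        rw [abs_of_nonpos (h y hy), abs_of_nonpos (h z hz)]; exact neg_le_neg (hm hy hz hyz)
    set G := iteratedDeriv (j + 1) g with hG
    have hxx : x ∈ Ioo a b := hIoo x (by linarith) (by linarith)
    -- mean value theorem on the half-interval towards which `|g^{(j+2)}|` grows
    have hmvt : ∃ y, a ≤ y - R / 2 ∧ y + R / 2 ≤ b ∧
        |iteratedDeriv (j + 2) g x| * (R / 2) ≤ |G y| + |G x| := by
      rcases hmono with hm | hm
      · obtain ⟨c, hc, hc'⟩ := exists_hasDerivAt_eq_slope G (iteratedDeriv (j + 2) g)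
          (show x < x + R / 2 by linarith)
          (fun y hy => (hd (j + 1) y ⟨by linarith [hy.1], by linarith [hy.2]⟩
            ).continuousAt.continuousWithinAt)
          (fun y hy => hd (j + 1) y ⟨by linarith [hy.1], by linarith [hy.2]⟩)
        refine ⟨x + R / 2, by linarith, by linarith, ?_⟩
        have := hm x hxx c (hIoo c (by linarith [hc.1]) (by linarith [hc.2])) hc.1.le
        calc _ ≤ |iteratedDeriv (j + 2) g c| * (R / 2) := by gcongr
          _ = |iteratedDeriv (j + 2) g c * (R / 2)| := by
            rw [abs_mul, abs_of_pos (half_pos hR)]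
          _ = |G (x + R / 2) - G x| := by
            rw [hc', add_sub_cancel_left, div_mul_cancel₀ _ (half_pos hR).ne']
          _ ≤ _ := abs_sub _ _
      · obtain ⟨c, hc, hc'⟩ := exists_hasDerivAt_eq_slope G (iteratedDeriv (j + 2) g)
          (show x - R / 2 < x by linarith)
          (fun y hy => (hd (j + 1) y ⟨by linarith [hy.1], by linarith [hy.2]⟩
            ).continuousAt.continuousWithinAt)
          (fun y hy => hd (j + 1) y ⟨by linarith [hy.1], by linarith [hy.2]⟩)
        refine ⟨x - R / 2, by linarith, by linarith, ?_⟩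
        have := hm c (hIoo c (by linarith [hc.1]) (by linarith [hc.2])) x hxx hc.2.le
        calc _ ≤ |iteratedDeriv (j + 2) g c| * (R / 2) := by gcongr
          _ = |iteratedDeriv (j + 2) g c * (R / 2)| := by
            rw [abs_mul, abs_of_pos (half_pos hR)]
          _ = |G x - G (x - R / 2)| := by
            rw [hc', sub_sub_cancel, div_mul_cancel₀ _ (half_pos hR).ne']
          _ ≤ |G x| + |G (x - R / 2)| := abs_sub _ _
          _ = _ := add_comm _ _
    obtain ⟨y, hya, hyb, hy⟩ := hmvt
    have e1 := ih (by omega) y (R / 2) (by linarith) hya hyb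
    have e2 := ih (by omega) x (R / 2) (by linarith) (by linarith) (by linarith)
    have hRj : 0 ≤ (R / 2) ^ j := by positivity
    have e3 : |iteratedDeriv (j + 2) g x| * (R / 2) * (R / 2) ^ j ≤ 2 * 2 ^ (j * (j + 1)) := by
      calc _ ≤ (|G y| + |G x|) * (R / 2) ^ j := by gcongr
        _ ≤ _ := by rw [add_mul]; linarith
    have e4 : R ^ (j + 1) = 2 ^ (j + 1) * ((R / 2) * (R / 2) ^ j) := by
      rw [← pow_succ', ← mul_pow]; congr 1; ring
    calc |iteratedDeriv (j + 1 + 1) g x| * R ^ (j + 1)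
        = 2 ^ (j + 1) * (|iteratedDeriv (j + 2) g x| * (R / 2) * (R / 2) ^ j) := by
          rw [e4]; ring
      _ ≤ 2 ^ (j + 1) * (2 * 2 ^ (j * (j + 1))) := by gcongr
      _ = 2 ^ (j + 1 + (1 + j * (j + 1))) := by ring
      _ ≤ 2 ^ ((j + 1) * (j + 1 + 1)) := by
          apply pow_le_pow_right₀ (by norm_num); nlinarith

/-! ### Chains of charts -/

/-- `[a,b]` is the image of a `C^k`-chart `ψ` for which `g ∘ ψ` is also a `C^k`-chart. -/
def Chartable (k : ℕ) (g : ℝ → ℝ) (a b : ℝ) : Prop :=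
  a ≤ b ∧ ∃ ψ : ℝ → ℝ, ψ '' Icc (-1:ℝ) 1 = Icc a b ∧ IsCkChart k ψ ∧ IsCkChart k (g ∘ ψ)

/-- `[a,b]` is cut by points `a = t 0 ≤ t 1 ≤ … ≤ t n = b` into `n` consecutive pieces, each of
them `Chartable`; pieces may be degenerate, and `n = 0` forces `a = b`. -/
def ChartChain (k : ℕ) (g : ℝ → ℝ) (n : ℕ) (a b : ℝ) : Prop :=
  ∃ t : ℕ → ℝ, t 0 = a ∧ t n = b ∧ ∀ i < n, Chartable k g (t i) (t (i + 1))

lemma ChartChain.trans {k : ℕ} {g : ℝ → ℝ} {m n : ℕ} {a b c : ℝ}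
    (h₁ : ChartChain k g m a b) (h₂ : ChartChain k g n b c) : ChartChain k g (m + n) a c := by
  obtain ⟨t, ht0, htm, ht⟩ := h₁
  obtain ⟨u, hu0, hun, hu⟩ := h₂
  refine ⟨fun i => if i ≤ m then t i else u (i - m), by simpa using ht0, ?_, ?_⟩
  · by_cases hn : n = 0
    · subst hn
      simp only [add_zero, le_refl, if_true]
      rw [htm, ← hu0, hun]
    · simp [hn, hun]
  · intro i hi
    rcases lt_trichotomy i m with h | h | h
    · simpa [h.le, Nat.succ_le_of_lt h] using ht i h
    · subst h
      have := hu 0 (by omega)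
      simp only [le_refl, if_true, Nat.add_sub_cancel_left, Nat.not_succ_le_self, if_false]
      rwa [htm, ← hu0]
    · have := hu (i - m) (by omega)
      have e : i + 1 - m = i - m + 1 := by omega
      simpa [not_le.2 h, not_le.2 (Nat.lt_succ_of_lt h), e] using this

/-- If every subinterval whose interior misses the finite set `T` has a chain of length at most `n`,
then cutting at `T` gives a chain of length at most `(#T + 1) n`. -/
lemma ChartChain.of_finset {k : ℕ} {g : ℝ → ℝ} (n : ℕ) (T : Finset ℝ) :
    ∀ a b : ℝ, a ≤ b →
      (∀ c d, a ≤ c → c ≤ d → d ≤ b → Disjoint (Ioo c d) (T : Set ℝ) →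
        ∃ N ≤ n, ChartChain k g N c d) →
      ∃ N ≤ (T.card + 1) * n, ChartChain k g N a b := by
  induction T using Finset.induction_on_max with
  | empty =>
    intro a b hab h
    simpa using h a b le_rfl hab le_rfl (by simp)
  | insert x T hx ih =>
    intro a b hab h
    have hxT : x ∉ T := fun hxT => lt_irrefl _ (hx x hxT)
    rw [Finset.card_insert_of_notMem hxT]
    by_cases hxab : x ∈ Ioo a b
    · obtain ⟨N₁, hN₁, h₁⟩ := ih a x hxab.1.le (fun c d hc hcd hd hdis => h c d hc hcd
        (hd.trans hxab.2.le) (by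
          rw [Finset.coe_insert, Set.disjoint_insert_right]
          exact ⟨fun hxc => absurd hxc.2 (not_lt.2 hd), hdis⟩))
      obtain ⟨N₂, hN₂, h₂⟩ := h x b hxab.1.le hxab.2.le le_rfl (by
        rw [Set.disjoint_left]
        intro y hy hyT
        rw [Finset.coe_insert, Set.mem_insert_iff] at hyT
        rcases hyT with rfl | hyT
        · exact lt_irrefl _ hy.1
        · exact lt_asymm hy.1 (hx y hyT))
      exact ⟨N₁ + N₂, by linarith, h₁.trans h₂⟩
    · obtain ⟨N, hN, h'⟩ := ih a b hab (fun c d hc hcd hd hdis => h c d hc hcd hd (by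
          rw [Finset.coe_insert, Set.disjoint_insert_right]
          exact ⟨fun hxc => hxab ⟨hc.trans_lt hxc.1, hxc.2.trans_le hd⟩, hdis⟩))
      exact ⟨N, by linarith, h'⟩

lemma ChartChain.toPartition {k : ℕ} {g : ℝ → ℝ} {N : ℕ} {p q : ℝ} (hN : 0 < N)
    (h : ChartChain k g N p q) :
    ∃ a b : Fin N → ℝ,
        (∀ j, a j ≤ b j) ∧
        (∀ j j', j ≠ j' → Ioo (a j) (b j) ∩ Ioo (a j') (b j') = ∅) ∧
        (⋃ j, Icc (a j) (b j)) = Icc p q ∧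
        ∃ ψ : Fin N → ℝ → ℝ,
          (∀ j, ψ j '' Icc (-1:ℝ) 1 = Icc (a j) (b j)) ∧
          (∀ j, IsCkChart k (ψ j)) ∧
          (∀ j, IsCkChart k (g ∘ ψ j)) := by
  obtain ⟨t, ht0, htN, ht⟩ := h
  have hmono : ∀ i j, i ≤ j → j ≤ N → t i ≤ t j := by
    intro i j hij
    induction j, hij using Nat.le_induction with
    | base => intro _; exact le_rfl
    | succ j hij ih => intro hj; exact (ih (by omega)).trans (ht j (by omega)).1
  choose ψ hψ using fun j : Fin N => (ht j j.2).2
  refine ⟨fun j => t j, fun j => t (j + 1), fun j => (ht j j.2).1, ?_, ?_, ψ,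
    fun j => (hψ j).1, fun j => (hψ j).2.1, fun j => (hψ j).2.2⟩
  · have aux : ∀ j j' : Fin N, j < j' →
        Ioo (t j) (t (j + 1)) ∩ Ioo (t j') (t (j' + 1)) = ∅ := by
      intro j j' hjj
      ext x
      simp only [mem_inter_iff, mem_Ioo, mem_empty_iff_false, iff_false]
      rintro ⟨⟨_, h1⟩, ⟨h2, _⟩⟩
      have := hmono (j + 1) j' hjj j'.2.le
      linarith
    intro j j' hne
    rcases lt_or_gt_of_ne hne with h | h
    · exact aux j j' h
    · rw [inter_comm]; exact aux j' j h
  · have aux : ∀ n, 0 < n → n ≤ N → ∀ x, x ∈ Icc (t 0) (t n) → ∃ j < n, x ∈ Icc (t j) (t (j + 1)) := by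
      intro n hn
      induction n, hn using Nat.le_induction with
      | base => intro _ x hx; exact ⟨0, by norm_num, hx⟩
      | succ n hn ih =>
        intro hnN x hx
        rcases le_total x (t n) with h | h
        · obtain ⟨j, hj, hxj⟩ := ih (by omega) x ⟨hx.1, h⟩
          exact ⟨j, by omega, hxj⟩
        · exact ⟨n, by omega, h, hx.2⟩
    ext x
    simp only [mem_iUnion]
    constructor
    · rintro ⟨j, hj⟩
      rw [← ht0, ← htN]
      exact ⟨(hmono 0 j (Nat.zero_le _) j.2.le).trans hj.1, hj.2.trans (hmono _ N j.2 le_rfl)⟩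
    · intro hx
      rw [← ht0, ← htN] at hx
      obtain ⟨j, hj, hxj⟩ := aux N hN le_rfl x hx
      exact ⟨⟨j, hj⟩, hxj⟩

/-! ### Power substitution -/

/-- For a function that is `C^k` at every point of `[-1,1]`, the derivative bounds need only be
verified for the unrestricted derivatives and away from the left endpoint, by continuity. -/
lemma isCkChart_of_forall {k : ℕ} {f : ℝ → ℝ} (hf : ∀ x ∈ Icc (-1:ℝ) 1, ContDiffAt ℝ k f x)
    (h0 : ∀ x ∈ Icc (-1:ℝ) 1, |f x - f 0| ≤ 1)
    (h : ∀ i : ℕ, 1 ≤ i → i ≤ k → ∀ x ∈ Ioc (-1:ℝ) 1, |iteratedDeriv i f x| ≤ 1) :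
    IsCkChart k f := by
  have hU : UniqueDiffOn ℝ (Icc (-1:ℝ) 1) := uniqueDiffOn_Icc (by norm_num)
  have hc : ContDiffOn ℝ k f (Icc (-1) 1) := fun x hx => (hf x hx).contDiffWithinAt
  refine ⟨hc, h0, fun i hi hik x hx => ?_⟩
  have hcl : Icc (-1:ℝ) 1 = closure (Ioc (-1:ℝ) 1) := (closure_Ioc (by norm_num)).symm
  have hcont := (hc.continuousOn_iteratedDerivWithin (m := i) (by exact_mod_cast hik) hU).abs
  rw [hcl] at hx
  refine le_on_closure (s := Ioc (-1:ℝ) 1) (f := fun x => |iteratedDerivWithin i f (Icc (-1) 1) x|)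
    (g := fun _ => (1:ℝ)) ?_ ?_ continuousOn_const hx
  · intro y hy
    have hy' := Ioc_subset_Icc_self hy
    rw [iteratedDerivWithin_eq_iteratedDeriv hU ((hf y hy').of_le (by exact_mod_cast hik)) hy']
    exact h i hi hik y hy
  · rwa [← hcl]

/-- The `i`-th of `K` pieces of the substitution `x = e + L u^k`, `u ∈ [0,1]`, reparametrized by
`[-1,1]`. If `|g⁽ʲ⁾|` grows at most like `C · dist(x, e)^(1-j)` near `e` and `K ≥ k! C k`, then
both this map and its composition with `g` are `C^k`-charts. -/
lemma powChart_isCkChart {k K : ℕ} (hk : 0 < k) {C : ℝ} (hC : 1 ≤ C)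
    (hK : k.factorial * C * k ≤ K) {g : ℝ → ℝ} {e L : ℝ}
    (hg : AnalyticOnNhd ℝ g (Icc (-1) 1))
    (hg01 : ∀ x ∈ Icc (-1:ℝ) 1, 0 ≤ g x ∧ g x ≤ 1)
    (hL0 : L ≠ 0) (hL1 : |L| ≤ 1)
    (hI : ∀ u ∈ Icc (0:ℝ) 1, e + L * u ∈ Icc (-1:ℝ) 1)
    (hgr : ∀ j, 1 ≤ j → j ≤ k → ∀ v, 0 < v → v ≤ 1 →
      |iteratedDeriv j g (e + L * v)| * (|L| * v) ^ j ≤ C * (|L| * v))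
    {i : ℕ} (hi : i < K) :
    IsCkChart k (fun s => e + L * ((2 * K : ℝ)⁻¹ * ((2 * i + 1) + s)) ^ k) ∧
    IsCkChart k (g ∘ fun s => e + L * ((2 * K : ℝ)⁻¹ * ((2 * i + 1) + s)) ^ k) := by
  have hKpos : (0:ℝ) < K := by exact_mod_cast (Nat.zero_le i).trans_lt hi
  have hk1 : (1:ℝ) ≤ k := by exact_mod_cast hk
  have hf1 : (1:ℝ) ≤ k.factorial := by exact_mod_cast k.factorial_pos
  set α : ℝ := (2 * K : ℝ)⁻¹ with hα
  have hαpos : 0 < α := by positivity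
  have hαK : α * (2 * K) = 1 := inv_mul_cancel₀ (by positivity)
  set ψ : ℝ → ℝ := fun s => e + L * (α * ((2 * i + 1) + s)) ^ k with hψ
  have hiK : (i:ℝ) + 1 ≤ K := by exact_mod_cast hi
  have hu0 : ∀ s ∈ Icc (-1:ℝ) 1, 0 ≤ α * ((2 * i + 1) + s) := fun s hs =>
    mul_nonneg hαpos.le (by have := hs.1; have : (0:ℝ) ≤ i := Nat.cast_nonneg i; linarith)
  have hu1 : ∀ s ∈ Icc (-1:ℝ) 1, α * ((2 * i + 1) + s) ≤ 1 := fun s hs => by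
    rw [← hαK]; exact mul_le_mul_of_nonneg_left (by linarith [hs.2]) hαpos.le
  have hup : ∀ s ∈ Ioc (-1:ℝ) 1, 0 < α * ((2 * i + 1) + s) := fun s hs =>
    mul_pos hαpos (by have := hs.1; have : (0:ℝ) ≤ i := Nat.cast_nonneg i; linarith)
  have hv01 : ∀ s ∈ Icc (-1:ℝ) 1, (α * ((2 * i + 1) + s)) ^ k ∈ Icc (0:ℝ) 1 := fun s hs =>
    ⟨pow_nonneg (hu0 s hs) k, pow_le_one₀ (hu0 s hs) (hu1 s hs)⟩
  have h0I : (0:ℝ) ∈ Icc (-1:ℝ) 1 := by norm_num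
  have hψI : ∀ s ∈ Icc (-1:ℝ) 1, ψ s ∈ Icc (-1:ℝ) 1 := fun s hs => hI _ (hv01 s hs)
  have hψc : ∀ n : ℕ, ContDiff ℝ n ψ := fun n => by fun_prop
  -- the smallness of the step absorbs all constants
  have hCk : k.factorial * C * (k * α) ≤ 1 / 2 := by
    have : k.factorial * C * k * α ≤ K * α := by gcongr
    linarith
  have hkα : k * α ≤ 1 / 2 := by
    refine le_trans ?_ hCk
    exact le_mul_of_one_le_left (by positivity) (one_le_mul_of_one_le_of_one_le hf1 hC)
  have hψd : ∀ n, 1 ≤ n → n ≤ k → ∀ s ∈ Ioc (-1:ℝ) 1, |iteratedDeriv n ψ s| ≤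
      (|L| * (α * ((2 * i + 1) + s)) ^ k) * ((k * α) / (α * ((2 * i + 1) + s))) ^ n := by
    intro n hn hnk s hs
    have hu := hup s hs
    rw [hψ, iteratedDeriv_powChart _ _ _ _ _ hn]
    set u := α * ((2 * i + 1) + s)
    have hdesc : (k.descFactorial n : ℝ) ≤ (k:ℝ) ^ n := by
      exact_mod_cast Nat.descFactorial_le_pow k n
    have hpow : u ^ k = u ^ (k - n) * u ^ n := by rw [← pow_add, Nat.sub_add_cancel hnk]
    rw [abs_mul, abs_mul, abs_mul, abs_of_nonneg (pow_nonneg hαpos.le n),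
      abs_of_nonneg (pow_nonneg hu.le _), Nat.abs_cast]
    calc |L| * (α ^ n * (k.descFactorial n * u ^ (k - n)))
        ≤ |L| * (α ^ n * ((k:ℝ) ^ n * u ^ (k - n))) := by gcongr
      _ = _ := by
        clear_value u
        rw [div_pow, hpow]
        field_simp; ring
  have hfin : ∀ n, 1 ≤ n → n ≤ k → ∀ s ∈ Ioc (-1:ℝ) 1,
      (|L| * (α * ((2 * i + 1) + s)) ^ k) * ((k * α) / (α * ((2 * i + 1) + s))) ^ n ≤ k * α := by
    intro n hn hnk s hs
    have hu := hup s hs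
    have hu1' := hu1 s (Ioc_subset_Icc_self hs)
    set u := α * ((2 * i + 1) + s)
    have hpow : u ^ k = u ^ (k - n) * u ^ n := by rw [← pow_add, Nat.sub_add_cancel hnk]
    calc (|L| * u ^ k) * ((k * α) / u) ^ n = |L| * u ^ (k - n) * (k * α) ^ n := by
          rw [div_pow, hpow]; field_simp
      _ ≤ 1 * 1 * (k * α) ^ 1 := by
          gcongr ?_ * ?_ * ?_
          · exact pow_le_one₀ hu.le hu1'
          · exact pow_le_pow_of_le_one (by positivity) (by linarith) hn
      _ = k * α := by ring
  constructor
  · refine isCkChart_of_forall (fun x _ => (hψc k).contDiffAt) (fun x hx => ?_)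
      (fun n hn hnk s hs => ?_)
    · have h1 := hv01 x hx
      have h2 := hv01 0 h0I
      have : ψ x - ψ 0 = L * ((α * ((2 * i + 1) + x)) ^ k - (α * ((2 * i + 1) + 0)) ^ k) := by
        simp only [hψ]; ring
      rw [this, abs_mul]
      refine mul_le_one₀ hL1 (abs_nonneg _) (abs_le.2 ⟨by linarith [h1.1, h2.2], by linarith [h1.2, h2.1]⟩)
    · exact ((hψd n hn hnk s hs).trans (hfin n hn hnk s hs)).trans (by linarith)
  · refine isCkChart_of_forall (fun x hx => ?_) (fun x hx => ?_)
      (fun n hn hnk s hs => ?_)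
    · exact (hg _ (hψI x hx)).contDiffAt.comp x (hψc k).contDiffAt
    · have h1 := hg01 _ (hψI x hx)
      have h2 := hg01 _ (hψI 0 h0I)
      simp only [Function.comp_apply]
      exact abs_le.2 ⟨by linarith [h1.1, h2.2], by linarith [h1.2, h2.1]⟩
    · have hs' := Ioc_subset_Icc_self hs
      have hu := hup s hs
      have hLp : 0 < |L| := abs_pos.2 hL0
      have hb := hfin n hn hnk s hs
      have key := iteratedDeriv_comp_bound (g := g) (f := ψ) (x := s)
        (ρ := |L| * (α * ((2 * i + 1) + s)) ^ k)
        (C := C * (|L| * (α * ((2 * i + 1) + s)) ^ k)) (D := (k * α) / (α * ((2 * i + 1) + s)))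
        hn (hg _ (hψI s hs')) (hψc n) (by positivity) (by positivity)
        (fun j hj hjn => hgr j hj (hjn.trans hnk) _ (pow_pos hu k) (hv01 s hs').2)
        (fun j hj hjn => hψd j hj (hjn.trans hnk) s hs)
      refine key.trans ?_
      have hfac : (n.factorial : ℝ) ≤ k.factorial := by exact_mod_cast Nat.factorial_le hnk
      calc _ = n.factorial * C * ((|L| * (α * ((2 * i + 1) + s)) ^ k) *
              ((k * α) / (α * ((2 * i + 1) + s))) ^ n) := by ring
        _ ≤ k.factorial * C * (k * α) := by gcongr
        _ ≤ 1 := by linarith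

lemma image_Icc_of_monotoneOn {f : ℝ → ℝ} {a b : ℝ} (hab : a ≤ b) (hf : ContinuousOn f (Icc a b))
    (hm : MonotoneOn f (Icc a b)) : f '' Icc a b = Icc (f a) (f b) := by
  apply Subset.antisymm
  · rintro _ ⟨x, hx, rfl⟩
    exact ⟨hm (left_mem_Icc.2 hab) hx hx.1, hm hx (right_mem_Icc.2 hab) hx.2⟩
  · exact intermediate_value_Icc hab hf

lemma image_Icc_of_antitoneOn {f : ℝ → ℝ} {a b : ℝ} (hab : a ≤ b) (hf : ContinuousOn f (Icc a b))
    (hm : AntitoneOn f (Icc a b)) : f '' Icc a b = Icc (f b) (f a) := by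
  apply Subset.antisymm
  · rintro _ ⟨x, hx, rfl⟩
    exact ⟨hm hx (right_mem_Icc.2 hab) hx.2, hm (left_mem_Icc.2 hab) hx hx.1⟩
  · exact intermediate_value_Icc' hab hf

/-- The pieces of `powChart_isCkChart` fit together to a chain from `e` to `e + L` or, for negative
`L`, from `e + L` to `e`. -/
lemma halfChain {k K : ℕ} (hk : 0 < k) {C : ℝ} (hC : 1 ≤ C)
    (hK : k.factorial * C * k ≤ K) (hK0 : 0 < K) {g : ℝ → ℝ} {e L : ℝ}
    (hg : AnalyticOnNhd ℝ g (Icc (-1) 1))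
    (hg01 : ∀ x ∈ Icc (-1:ℝ) 1, 0 ≤ g x ∧ g x ≤ 1)
    (hL0 : L ≠ 0) (hL1 : |L| ≤ 1)
    (hI : ∀ u ∈ Icc (0:ℝ) 1, e + L * u ∈ Icc (-1:ℝ) 1)
    (hgr : ∀ j, 1 ≤ j → j ≤ k → ∀ v, 0 < v → v ≤ 1 →
      |iteratedDeriv j g (e + L * v)| * (|L| * v) ^ j ≤ C * (|L| * v)) :
    (0 < L → ChartChain k g K e (e + L)) ∧ (L < 0 → ChartChain k g K (e + L) e) := by
  have hKr : (0:ℝ) < K := by exact_mod_cast hK0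
  have hch := fun (i : ℕ) (hi : i < K) =>
    powChart_isCkChart hk hC hK hg hg01 hL0 hL1 hI hgr hi
  have hl : ∀ i : ℕ, (2 * K : ℝ)⁻¹ * ((2 * i + 1) + (-1)) = (i:ℝ) / K := fun i => by
    field_simp; ring
  have hr : ∀ i : ℕ, (2 * K : ℝ)⁻¹ * ((2 * i + 1) + 1) = ((i + 1 : ℕ):ℝ) / K := fun i => by
    push_cast; field_simp; ring
  have hmono : ∀ i : ℕ, MonotoneOn (fun s : ℝ => ((2 * K : ℝ)⁻¹ * ((2 * i + 1) + s)) ^ k)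
      (Icc (-1) 1) := by
    intro i x hx y hy hxy
    have hx1 := hx.1
    have : (0:ℝ) ≤ i := Nat.cast_nonneg i
    have h0 : (0:ℝ) ≤ (2 * i + 1) + x := by linarith
    simp only
    gcongr
  have hc : ∀ i : ℕ, ContinuousOn (fun s : ℝ => e + L * ((2 * K : ℝ)⁻¹ * ((2 * i + 1) + s)) ^ k)
      (Icc (-1) 1) := fun i => by fun_prop
  have h11 : (-1:ℝ) ≤ 1 := by norm_num
  constructor
  · intro hL
    refine ⟨fun i => e + L * ((i:ℝ) / K) ^ k, by simp [hk.ne'], by simp [hKr.ne'], fun i hi => ?_⟩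
    have him := image_Icc_of_monotoneOn h11 (hc i) (fun x hx y hy hxy =>
      add_le_add_right (mul_le_mul_of_nonneg_left (hmono i hx hy hxy) hL.le) e)
    simp only [hl, hr] at him
    refine ⟨?_, _, him, hch i hi⟩
    have : ((i:ℝ) / K) ≤ ((i + 1 : ℕ):ℝ) / K := by gcongr; omega
    have h0 : 0 ≤ (i:ℝ) / K := by positivity
    exact add_le_add_right (mul_le_mul_of_nonneg_left (pow_le_pow_left₀ h0 this k) hL.le) e
  · intro hL
    refine ⟨fun i => e + L * (((K - i : ℕ):ℝ) / K) ^ k, by simp [hKr.ne'], by simp [hk.ne'],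
      fun i hi => ?_⟩
    have him := image_Icc_of_antitoneOn h11 (hc (K - (i + 1))) (fun x hx y hy hxy =>
      add_le_add_right (mul_le_mul_of_nonpos_left (hmono (K - (i + 1)) hx hy hxy) hL.le) e)
    have hKi : K - (i + 1) + 1 = K - i := by omega
    simp only [hl, hr, hKi] at him
    refine ⟨?_, _, him, hch _ (by omega)⟩
    have : (((K - (i + 1) : ℕ):ℝ) / K) ≤ ((K - i : ℕ):ℝ) / K := by gcongr; omega
    have h0 : 0 ≤ ((K - (i + 1) : ℕ):ℝ) / K := by positivity
    exact add_le_add_right (mul_le_mul_of_nonpos_left (pow_le_pow_left₀ h0 this k) hL.le) e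

/-- An interval on which the derivatives of orders `2, …, k + 1` have constant sign is charted by
two power substitutions, one centred at each end and both reaching to the midpoint. -/
lemma gapChain {k : ℕ} (hk : 0 < k) {g : ℝ → ℝ} {a b : ℝ} (hab : a < b)
    (ha : -1 ≤ a) (hb : b ≤ 1)
    (hg : AnalyticOnNhd ℝ g (Icc (-1) 1))
    (hg01 : ∀ x ∈ Icc (-1:ℝ) 1, 0 ≤ g x ∧ g x ≤ 1)
    (h1 : ∀ x ∈ Icc (-1:ℝ) 1, |deriv g x| ≤ 1)
    (hs : ∀ j, 2 ≤ j → j ≤ k + 1 → (∀ x ∈ Ioo a b, 0 ≤ iteratedDeriv j g x) ∨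
      (∀ x ∈ Ioo a b, iteratedDeriv j g x ≤ 0)) :
    ChartChain k g (2 * (k.factorial * 2 ^ (k * (k + 1)) * k)) a b := by
  set K := k.factorial * 2 ^ (k * (k + 1)) * k with hK
  have hK0 : 0 < K := by have := k.factorial_pos; positivity
  have hKr : (k.factorial * (2:ℝ) ^ (k * (k + 1)) * k) ≤ K := by rw [hK]; push_cast; exact le_rfl
  have hsub : Icc a b ⊆ Icc (-1:ℝ) 1 := Icc_subset_Icc ha hb
  have hgrow := deriv_growth k (hg.mono hsub) (fun x hx => h1 x (hsub hx)) hs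
  have hgr' : ∀ j, 1 ≤ j → j ≤ k → ∀ x R, 0 < R → a ≤ x - R → x + R ≤ b →
      |iteratedDeriv j g x| * R ^ j ≤ 2 ^ (k * (k + 1)) * R := by
    intro j hj hjk x R hR hxa hxb
    obtain ⟨i, rfl⟩ : ∃ i, j = i + 1 := ⟨j - 1, by omega⟩
    have := hgrow i hjk x R hR hxa hxb
    calc _ = |iteratedDeriv (i + 1) g x| * R ^ i * R := by ring
      _ ≤ 2 ^ (i * (i + 1)) * R := by gcongr
      _ ≤ _ := by
        gcongr
        · norm_num
        · omega
        · omega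
  set L := (b - a) / 2 with hL
  have hLpos : 0 < L := by linarith
  have hC : (1:ℝ) ≤ 2 ^ (k * (k + 1)) := one_le_pow₀ (by norm_num)
  have habs : |L| = L := abs_of_pos hLpos
  have c1 := (halfChain hk hC hKr hK0 (e := a) (L := L) hg hg01 hLpos.ne'
    (by rw [habs]; linarith)
    (fun u hu => ⟨by nlinarith [hu.1], by nlinarith [hu.2]⟩)
    (fun j hj hjk v hv hv1 => by
      rw [habs]
      exact hgr' j hj hjk _ _ (by positivity) (by linarith) (by nlinarith))).1 hLpos
  have c2 := (halfChain hk hC hKr hK0 (e := b) (L := -L) hg hg01 (by linarith)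
    (by rw [abs_neg, habs]; linarith)
    (fun u hu => ⟨by nlinarith [hu.2], by nlinarith [hu.1]⟩)
    (fun j hj hjk v hv hv1 => by
      rw [abs_neg, habs]
      exact hgr' j hj hjk _ _ (by positivity) (by nlinarith) (by linarith))).2 (by linarith)
  have hmid : a + L = b + -L := by rw [hL]; ring
  rw [two_mul]
  exact c1.trans (hmid ▸ c2)

/-! ### Zeros of polynomials in x and g(x) -/

/-- In a nontrivial relation `∑ r_j(x) F(x)^j = 0` on a connected set, powers of the nonzero analytic
function `F` can be cancelled, so the lowest nonzero coefficient vanishes at all zeros of `F`. -/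
lemma exists_coeff_vanishing {S : Set ℝ} (hS : IsPreconnected S) {F : ℝ → ℝ}
    (hF : AnalyticOnNhd ℝ F S) (hF0 : ∃ x ∈ S, F x ≠ 0) :
    ∀ (B : ℕ) (r : Fin B → Polynomial ℝ), r ≠ 0 →
      (∀ x ∈ S, ∑ j, (r j).eval x * F x ^ (j : ℕ) = 0) →
      ∃ j, r j ≠ 0 ∧ ∀ x ∈ S, F x = 0 → (r j).eval x = 0 := by
  intro B
  induction B with
  | zero => intro r hr; exact absurd (Subsingleton.elim _ _) hr
  | succ B ih =>
    intro r hr hsum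
    by_cases h0 : r 0 = 0
    · have hr' : (fun j : Fin B => r j.succ) ≠ 0 := by
        intro h
        apply hr
        funext j
        refine Fin.cases h0 (fun i => congrFun h i) j
      have hG : AnalyticOnNhd ℝ (fun x => ∑ j : Fin B, (r j.succ).eval x * F x ^ (j : ℕ)) S := by
        apply Finset.analyticOnNhd_fun_sum
        intro j _
        exact (AnalyticOnNhd.eval_polynomial (r j.succ) |>.mono (subset_univ _)).mul (hF.pow _)
      have hmul : ∀ x ∈ S, F x * (∑ j : Fin B, (r j.succ).eval x * F x ^ (j : ℕ)) = 0 := by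
        intro x hx
        have := hsum x hx
        rw [Fin.sum_univ_succ, h0] at this
        rw [← this, Finset.mul_sum]
        simp only [Polynomial.eval_zero, zero_mul, zero_add, Fin.val_succ]
        refine Finset.sum_congr rfl fun j _ => by ring
      rcases hF.eq_zero_or_eq_zero_of_mul_eq_zero hG hmul hS with h | h
      · obtain ⟨x, hx, hx0⟩ := hF0
        exact absurd (h x hx) hx0
      · obtain ⟨j, hj, hj'⟩ := ih _ hr' h
        exact ⟨j.succ, hj, hj'⟩
    · refine ⟨0, h0, fun x hx hFx => ?_⟩
      have := hsum x hx
      rw [Fin.sum_univ_succ] at this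
      simpa [hFx] using this

open MvPolynomial in
lemma analyticOnNhd_evalGraph {S : Set ℝ} {g : ℝ → ℝ} (hg : AnalyticOnNhd ℝ g S)
    (Q : MvPolynomial (Fin 2) ℝ) : AnalyticOnNhd ℝ (fun x => eval ![x, g x] Q) S := by
  induction Q using MvPolynomial.induction_on with
  | C a => simpa using analyticOnNhd_const
  | add p q hp hq =>
    simp only [map_add]
    exact hp.add hq
  | mul_X p i hp =>
    have : AnalyticOnNhd ℝ (fun x => (![x, g x] : Fin 2 → ℝ) i) S := by
      fin_cases i
      · simpa using analyticOnNhd_id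
      · simpa using hg
    simp only [map_mul, eval_X]
    exact hp.mul this

open MvPolynomial in
lemma hasDerivAt_evalGraph {g : ℝ → ℝ} {x : ℝ} (hg : DifferentiableAt ℝ g x)
    (Q : MvPolynomial (Fin 2) ℝ) :
    HasDerivAt (fun x => eval ![x, g x] Q)
      (eval ![x, g x] (pderiv 0 Q) + eval ![x, g x] (pderiv 1 Q) * deriv g x) x := by
  induction Q using MvPolynomial.induction_on with
  | C a => simpa using hasDerivAt_const x a
  | add p q hp hq =>
    have := hp.add hq
    simp only [map_add]
    refine this.congr_deriv ?_
    ring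
  | mul_X p i hp =>
    have : HasDerivAt (fun x => (![x, g x] : Fin 2 → ℝ) i) ((![1, deriv g x] : Fin 2 → ℝ) i) x := by
      fin_cases i
      · exact hasDerivAt_id x
      · exact hg.hasDerivAt
    have := hp.mul this
    simp only [map_mul, eval_X]
    refine this.congr_deriv ?_
    fin_cases i <;> simp [pderiv_X] <;> ring

open MvPolynomial in
lemma totalDegree_pderiv_succ_le {P : MvPolynomial (Fin 2) ℝ} {i : Fin 2} (h : pderiv i P ≠ 0) :
    (pderiv i P).totalDegree + 1 ≤ P.totalDegree := by
  obtain ⟨m, hm, hmd⟩ : ∃ m ∈ (pderiv i P).support,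
      (m.sum fun _ e => e) = (pderiv i P).totalDegree := by
    obtain ⟨m, hm, h'⟩ := Finset.exists_mem_eq_sup _ (support_nonempty.2 h)
      (fun m : Fin 2 →₀ ℕ => m.sum fun _ e => e)
    exact ⟨m, hm, h'.symm⟩
  rw [← hmd]
  rw [mem_support_iff, coeff_pderiv] at hm
  have : m + Finsupp.single i 1 ∈ P.support := mem_support_iff.2 (left_ne_zero_of_mul hm)
  refine le_trans (le_of_eq ?_) (le_totalDegree this)
  rw [Finsupp.sum_add_index' (by simp) (by simp)]
  simp

open MvPolynomial in
lemma totalDegree_pderiv_le' (P : MvPolynomial (Fin 2) ℝ) (i : Fin 2) :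
    (pderiv i P).totalDegree ≤ P.totalDegree := by
  by_cases h : pderiv i P = 0
  · simp [h]
  · exact (Nat.le_succ _).trans (totalDegree_pderiv_succ_le h)

open MvPolynomial in
lemma eq_C_of_pderiv_eq_zero {P : MvPolynomial (Fin 2) ℝ} (h : ∀ i, pderiv i P = 0) :
    P = C (coeff 0 P) := by
  ext m
  rw [coeff_C]
  split_ifs with hm
  · rw [hm]
  · obtain ⟨i, hi⟩ : ∃ i, m i ≠ 0 := by
      by_contra hcon
      push Not at hcon
      exact hm (Finsupp.ext fun i => (hcon i).symm)
    have hle : Finsupp.single i 1 ≤ m := Finsupp.single_le_iff.2 (Nat.one_le_iff_ne_zero.2 hi)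
    have := congrArg (coeff (m - Finsupp.single i 1)) (h i)
    rw [coeff_pderiv, tsub_add_cancel_of_le hle, coeff_zero] at this
    rcases mul_eq_zero.1 this with h' | h'
    · exact h'
    · exact absurd h' (by positivity)

open MvPolynomial in
/-- A Bezout-type bound by dimension count. For `A = 4dD + d`, `B = 4d`, `m = A + BD`, the
polynomials `∑ c_ij x^i Q^j + P S` with `i < A`, `j < B` and `S` of degree `< m` in each variable
all have degree `< m + d` in each variable, and `AB + m² > (m + d)²`. So some such combination
vanishes identically with `c ≠ 0`; on the graph of `g` the term `P S` drops out. -/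
lemma exists_zeros_finset {S : Set ℝ} (hS : IsPreconnected S) {g : ℝ → ℝ}
    (hg : AnalyticOnNhd ℝ g S) {d D : ℕ} (hd : 0 < d) {P Q : MvPolynomial (Fin 2) ℝ}
    (hP : P ≠ 0) (hPd : P.totalDegree ≤ d) (hPg : ∀ x ∈ S, eval ![x, g x] P = 0)
    (hQd : Q.totalDegree ≤ D) (hQ0 : ∃ x ∈ S, eval ![x, g x] Q ≠ 0) :
    ∃ T : Finset ℝ, T.card ≤ 4 * d * D + d ∧ ∀ x ∈ S, eval ![x, g x] Q = 0 → x ∈ T := by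
  set A := 4 * d * D + d with hA
  set B := 4 * d with hB
  set m := A + B * D with hm
  set n := m + d with hn
  let e : ℕ × ℕ → (Fin 2 →₀ ℕ) := fun p => Finsupp.equivFunOnFinite.symm ![p.1, p.2]
  have he : Function.Injective e := by
    intro p q hpq
    have h0 := DFunLike.congr_fun hpq 0
    have h1 := DFunLike.congr_fun hpq 1
    simp [e] at h0 h1
    exact Prod.ext h0 h1
  let v : Fin A × Fin B → MvPolynomial (Fin 2) ℝ := fun p => X 0 ^ (p.1 : ℕ) * Q ^ (p.2 : ℕ)
  let w : Fin m × Fin m → MvPolynomial (Fin 2) ℝ := fun p => monomial (e (p.1, p.2)) 1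
  have hw : LinearIndependent ℝ w := by
    have := (basisMonomials (Fin 2) ℝ).linearIndependent
    rw [coe_basisMonomials] at this
    refine this.comp (fun p : Fin m × Fin m => e (p.1, p.2)) ?_
    intro p q hpq
    have := he hpq
    simp only [Prod.mk.injEq, Fin.val_inj] at this
    exact Prod.ext this.1 this.2
  let Φ : ((Fin A × Fin B → ℝ) × (Fin m × Fin m → ℝ)) →ₗ[ℝ] MvPolynomial (Fin 2) ℝ :=
    LinearMap.coprod (Fintype.linearCombination ℝ v)
      (LinearMap.mulLeft ℝ P ∘ₗ Fintype.linearCombination ℝ w)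
  let Ψ : ((Fin A × Fin B → ℝ) × (Fin m × Fin m → ℝ)) →ₗ[ℝ] (Fin n × Fin n → ℝ) :=
    (LinearMap.pi fun p : Fin n × Fin n => lcoeff ℝ (e (p.1, p.2))) ∘ₗ Φ
  have hΦ : ∀ c s, Φ (c, s) = ∑ p, c p • v p + P * ∑ p, s p • w p := fun c s => by
    simp only [Φ, LinearMap.coprod_apply, LinearMap.comp_apply, Fintype.linearCombination_apply,
      LinearMap.mulLeft_apply]
  -- degrees below `n`: `Ψ` records every coefficient of `Φ z` that can be nonzero
  have hdeg : ∀ z i, degreeOf i (Φ z) < n := by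
    rintro ⟨c, s⟩ i
    rw [hΦ]
    have hmn : 0 < m := by positivity
    have h1 : degreeOf i (∑ p, c p • v p) ≤ n - 1 := by
      refine (degreeOf_sum_le i _ _).trans (Finset.sup_le fun p _ => ?_)
      rw [smul_eq_C_mul]
      refine (degreeOf_C_mul_le _ _ _).trans ((degreeOf_mul_le _ _ _).trans ?_)
      have a1 : degreeOf i (X 0 ^ (p.1 : ℕ) : MvPolynomial (Fin 2) ℝ) ≤ p.1 := by
        refine (degreeOf_pow_le _ _ _).trans ?_
        rw [degreeOf_X]
        split_ifs <;> simp
      have a2 : degreeOf i (Q ^ (p.2 : ℕ)) ≤ B * D :=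
        (degreeOf_pow_le _ _ _).trans
          (Nat.mul_le_mul p.2.2.le ((degreeOf_le_totalDegree _ _).trans hQd))
      have := p.1.2
      omega
    have h2 : degreeOf i (P * ∑ p, s p • w p) ≤ n - 1 := by
      refine (degreeOf_mul_le _ _ _).trans ?_
      have a1 : degreeOf i P ≤ d := (degreeOf_le_totalDegree _ _).trans hPd
      have a2 : degreeOf i (∑ p, s p • w p) ≤ m - 1 := by
        refine (degreeOf_sum_le i _ _).trans (Finset.sup_le fun p _ => ?_)
        rw [smul_eq_C_mul]
        refine (degreeOf_C_mul_le _ _ _).trans ?_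
        simp only [w]
        rw [degreeOf_monomial_eq _ _ one_ne_zero]
        have := p.1.2
        have := p.2.2
        fin_cases i <;> simp [e] <;> omega
      omega
    have := degreeOf_add_le i (∑ p, c p • v p) (P * ∑ p, s p • w p)
    omega
  have hker : ∃ z, z ≠ 0 ∧ Ψ z = 0 := by
    have : LinearMap.ker Ψ ≠ ⊥ := by
      apply LinearMap.ker_ne_bot_of_finrank_lt
      simp only [Module.finrank_prod, Module.finrank_fintype_fun_eq_card, Fintype.card_prod,
        Fintype.card_fin]
      rw [hn]
      have : 2 * m * d + d * d < A * B := by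
        rw [hm, hA, hB]
        nlinarith [Nat.zero_le (d * d * D), Nat.mul_pos hd hd]
      nlinarith
    obtain ⟨z, hz, hz0⟩ := (Submodule.ne_bot_iff _).1 this
    exact ⟨z, hz0, hz⟩
  obtain ⟨⟨c, s⟩, hz0, hz⟩ := hker
  have hΦ0 : Φ (c, s) = 0 := by
    ext μ
    rw [coeff_zero]
    by_contra hμ
    have hμs : μ ∈ (Φ (c, s)).support := mem_support_iff.2 hμ
    have h0 : μ 0 < n := (monomial_le_degreeOf 0 hμs).trans_lt (hdeg _ 0)
    have h1 : μ 1 < n := (monomial_le_degreeOf 1 hμs).trans_lt (hdeg _ 1)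
    have hμe : μ = e (μ 0, μ 1) := by
      ext i
      fin_cases i <;> simp [e]
    have := congrFun hz (⟨μ 0, h0⟩, ⟨μ 1, h1⟩)
    simp only [Ψ, LinearMap.comp_apply, LinearMap.pi_apply, lcoeff_apply, Pi.zero_apply] at this
    rw [← hμe] at this
    exact hμ this
  -- if `c = 0`, then `P S = 0`, so `S = 0` and the kernel vector is zero
  have hc : c ≠ 0 := by
    rintro rfl
    rw [hΦ] at hΦ0
    simp only [Pi.zero_apply, zero_smul, Finset.sum_const_zero, zero_add] at hΦ0
    have := (mul_eq_zero.1 hΦ0).resolve_left hP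
    have hs := Fintype.linearIndependent_iff.1 hw s this
    exact hz0 (Prod.ext rfl (funext hs))
  let r : Fin B → Polynomial ℝ := fun j => ∑ i : Fin A, Polynomial.C (c (i, j)) * Polynomial.X ^ (i : ℕ)
  have hrc : ∀ i j, (r j).coeff (i : Fin A) = c (i, j) := by
    intro i j
    simp only [r, Polynomial.finsetSum_coeff, Polynomial.coeff_C_mul, Polynomial.coeff_X_pow,
      Fin.val_inj]
    simp
  have hr : r ≠ 0 := by
    intro h
    apply hc
    funext ⟨i, j⟩
    rw [← hrc, h]
    simp
  have hsum : ∀ x ∈ S, ∑ j, (r j).eval x * (eval ![x, g x] Q) ^ (j : ℕ) = 0 := by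
    intro x hx
    have h := congrArg (eval ![x, g x]) hΦ0
    rw [hΦ, map_add, map_mul, hPg x hx, zero_mul, add_zero, map_sum, map_zero,
      Fintype.sum_prod_type_right] at h
    rw [← h]
    refine Finset.sum_congr rfl fun j _ => ?_
    simp only [r, Polynomial.eval_finsetSum, Finset.sum_mul]
    refine Finset.sum_congr rfl fun i _ => ?_
    simp [v, smul_eval, mul_assoc]
  obtain ⟨j, hj, hj'⟩ := exists_coeff_vanishing hS (analyticOnNhd_evalGraph hg Q) hQ0 B r hr hsum
  refine ⟨(r j).roots.toFinset, ?_, fun x hx hx0 => ?_⟩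
  · refine (Multiset.toFinset_card_le _).trans ((Polynomial.card_roots' _).trans ?_)
    refine Polynomial.natDegree_sum_le_of_forall_le _ _ fun i _ => ?_
    exact (Polynomial.natDegree_C_mul_X_pow_le _ _).trans i.2.le
  · rw [Multiset.mem_toFinset, Polynomial.mem_roots hj]
    exact hj' x hx hx0

/-! ### Zeros of the derivatives of an algebraic function -/

open MvPolynomial in
/-- Descent on the degree: if `P_y` vanishes on the graph of `g`, then so does `P_x`, by
differentiating `P(x, g(x)) = 0`; one of the two is a nonzero annihilator of smaller degree, since
otherwise `P` would be a nonzero constant vanishing on the graph. -/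
lemma exists_annihilator_pderiv_ne {S : Set ℝ} (hSo : IsOpen S) (hSn : S.Nonempty) {g : ℝ → ℝ}
    (hg : AnalyticOnNhd ℝ g S) (n : ℕ) :
    ∀ P : MvPolynomial (Fin 2) ℝ, P ≠ 0 → P.totalDegree ≤ n →
      (∀ x ∈ S, eval ![x, g x] P = 0) →
      ∃ R : MvPolynomial (Fin 2) ℝ, R ≠ 0 ∧ R.totalDegree ≤ n ∧
        (∀ x ∈ S, eval ![x, g x] R = 0) ∧ ∃ x ∈ S, eval ![x, g x] (pderiv 1 R) ≠ 0 := by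
  induction n using Nat.strong_induction_on with
  | _ n ih =>
    intro P hP hPd hPg
    by_cases hy : ∃ x ∈ S, eval ![x, g x] (pderiv 1 P) ≠ 0
    · exact ⟨P, hP, hPd, hPg, hy⟩
    push Not at hy
    have hx : ∀ x ∈ S, eval ![x, g x] (pderiv 0 P) = 0 := by
      intro x hx
      have h1 := hasDerivAt_evalGraph (hg x hx).differentiableAt P
      have h2 : (fun x => eval ![x, g x] P) =ᶠ[nhds x] fun _ => 0 := by
        filter_upwards [hSo.mem_nhds hx] with y hy' using hPg y hy'
      have h3 := h1.unique ((hasDerivAt_const x (0:ℝ)).congr_of_eventuallyEq h2)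
      rwa [hy x hx, zero_mul, add_zero] at h3
    have key : ∀ i, (∀ x ∈ S, eval ![x, g x] (pderiv i P) = 0) → pderiv i P ≠ 0 →
        ∃ R : MvPolynomial (Fin 2) ℝ, R ≠ 0 ∧ R.totalDegree ≤ n ∧
        (∀ x ∈ S, eval ![x, g x] R = 0) ∧ ∃ x ∈ S, eval ![x, g x] (pderiv 1 R) ≠ 0 := by
      intro i hi hne
      have hlt := totalDegree_pderiv_succ_le hne
      obtain ⟨R, h1, h2, h3⟩ := ih (pderiv i P).totalDegree (by omega) _ hne le_rfl hi
      exact ⟨R, h1, by omega, h3⟩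
    by_cases hx0 : pderiv 0 P = 0
    · by_cases hy0 : pderiv 1 P = 0
      · have hC := eq_C_of_pderiv_eq_zero (P := P) (fun i => by fin_cases i <;> assumption)
        obtain ⟨x, hxS⟩ := hSn
        have h0 := hPg x hxS
        rw [hC, eval_C] at h0
        rw [h0, C_0] at hC
        exact absurd hC hP
      · exact key 1 hy hy0
    · exact key 0 hx hx0

lemma analyticOnNhd_iteratedDeriv {S : Set ℝ} {g : ℝ → ℝ} (hg : AnalyticOnNhd ℝ g S) (j : ℕ) :
    AnalyticOnNhd ℝ (iteratedDeriv j g) S := by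
  rw [iteratedDeriv_eq_iterate]
  exact fun x hx => (hg x hx).iterated_deriv j

open MvPolynomial in
/-- Implicit differentiation: with `U = P_y(x, g(x))`, the function `U^(2j) g⁽ʲ⁾` is a polynomial in
`x` and `g`. The recursion is
`Q_(j+1) = P_y (P_y Q_x - Q_y P_x) - 2j (P_y P_yx - P_yy P_x) Q_j`, from `U g' = -P_x`. -/
lemma exists_poly_iteratedDeriv {S : Set ℝ} (hSo : IsOpen S) {g : ℝ → ℝ}
    (hg : AnalyticOnNhd ℝ g S) {d : ℕ} {P : MvPolynomial (Fin 2) ℝ} (hPd : P.totalDegree ≤ d)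
    (hPg : ∀ x ∈ S, eval ![x, g x] P = 0) (j : ℕ) :
    ∃ Q : MvPolynomial (Fin 2) ℝ, Q.totalDegree ≤ 1 + 2 * d * j ∧
      ∀ x ∈ S, eval ![x, g x] (pderiv 1 P) ^ (2 * j) * iteratedDeriv j g x
        = eval ![x, g x] Q := by
  induction j with
  | zero => exact ⟨X 1, by simp [totalDegree_X], fun x hx => by simp⟩
  | succ j ih =>
    obtain ⟨Q, hQd, hQ⟩ := ih
    have hgx : ∀ x ∈ S, eval ![x, g x] (pderiv 0 P)
        + eval ![x, g x] (pderiv 1 P) * deriv g x = 0 := by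
      intro x hx
      have h1 := hasDerivAt_evalGraph (hg x hx).differentiableAt P
      have h2 : (fun x => eval ![x, g x] P) =ᶠ[nhds x] fun _ => 0 := by
        filter_upwards [hSo.mem_nhds hx] with y hy' using hPg y hy'
      exact h1.unique ((hasDerivAt_const x (0:ℝ)).congr_of_eventuallyEq h2)
    refine ⟨pderiv 1 P * (pderiv 1 P * pderiv 0 Q - pderiv 1 Q * pderiv 0 P)
      - C (2 * j : ℝ) * ((pderiv 1 P * pderiv 0 (pderiv 1 P)
        - pderiv 1 (pderiv 1 P) * pderiv 0 P) * Q), ?_, ?_⟩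
    · have hp : ∀ i, (pderiv i P).totalDegree ≤ d := fun i =>
        (totalDegree_pderiv_le' P i).trans hPd
      have hpp : ∀ i, (pderiv i (pderiv 1 P)).totalDegree ≤ d := fun i =>
        (totalDegree_pderiv_le' _ i).trans (hp 1)
      have hq : ∀ i, (pderiv i Q).totalDegree ≤ 1 + 2 * d * j := fun i =>
        (totalDegree_pderiv_le' Q i).trans hQd
      have e : 1 + 2 * d * (j + 1) = d + (d + (1 + 2 * d * j)) := by ring
      rw [e]
      refine (totalDegree_sub _ _).trans (max_le ?_ ?_)
      · refine (totalDegree_mul _ _).trans (Nat.add_le_add (hp 1) ?_)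
        refine (totalDegree_sub _ _).trans (max_le ?_ ?_)
        · exact (totalDegree_mul _ _).trans (Nat.add_le_add (hp 1) (hq 0))
        · rw [add_comm]
          exact (totalDegree_mul _ _).trans (Nat.add_le_add (hq 1) (hp 0))
      · refine (totalDegree_mul _ _).trans ?_
        rw [totalDegree_C, zero_add, ← add_assoc]
        refine (totalDegree_mul _ _).trans (Nat.add_le_add ?_ hQd)
        refine (totalDegree_sub _ _).trans (max_le ?_ ?_)
        · exact (totalDegree_mul _ _).trans (Nat.add_le_add (hp 1) (hpp 0))
        · exact (totalDegree_mul _ _).trans (Nat.add_le_add (hpp 1) (hp 0))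
    · intro x hx
      have hgd := (hg x hx).differentiableAt
      have hU := hasDerivAt_evalGraph hgd (pderiv 1 P)
      have hQ' := hasDerivAt_evalGraph hgd Q
      have hj := ((analyticOnNhd_iteratedDeriv hg j) x hx).differentiableAt.hasDerivAt
      rw [← iteratedDeriv_succ] at hj
      have hL := (hU.pow (2 * j)).mul hj
      have hEq : (fun x => eval ![x, g x] Q) =ᶠ[nhds x]
          ((fun x => eval ![x, g x] (pderiv 1 P)) ^ (2 * j) * iteratedDeriv j g) := by
        filter_upwards [hSo.mem_nhds hx] with y hy using (hQ y hy).symm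
      have h1 := hQ'.unique (hL.congr_of_eventuallyEq hEq)
      have h2 := hgx x hx
      have h3 := hQ x hx
      simp only [Pi.pow_apply] at h1
      simp only [map_sub, map_mul, eval_C]
      generalize eval ![x, g x] (pderiv 0 (pderiv 1 P)) = Uyx at *
      generalize eval ![x, g x] (pderiv 1 (pderiv 1 P)) = Uyy at *
      generalize eval ![x, g x] (pderiv 1 P) = u at *
      generalize eval ![x, g x] (pderiv 0 P) = px at *
      generalize eval ![x, g x] (pderiv 1 Q) = qy at *
      generalize eval ![x, g x] (pderiv 0 Q) = qx at *
      generalize eval ![x, g x] Q = q at *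
      generalize iteratedDeriv (j + 1) g x = G' at *
      generalize iteratedDeriv j g x = G at *
      generalize deriv g x = g' at *
      have hpow : ((2 * j : ℕ) : ℝ) * u ^ (2 * j - 1) * u = 2 * j * u ^ (2 * j) := by
        rcases Nat.eq_zero_or_pos j with rfl | hjpos
        · simp
        · rw [mul_assoc, ← pow_succ, Nat.sub_add_cancel (by omega)]
          push_cast
          ring
      have hpx : px = - (u * g') := by linarith
      have h4 : u ^ (2 * (j + 1)) * G' = u * u * (u ^ (2 * j) * G') := by ring
      have h5 : u ^ (2 * j) * G' = qx + qy * g'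
          - ((2 * j : ℕ) : ℝ) * u ^ (2 * j - 1) * (Uyx + Uyy * g') * G := by linarith
      rw [h4, h5, hpx, ← h3]
      linear_combination (- u * (Uyx + Uyy * g') * G) * hpow

/-- Each derivative of `g` either vanishes identically or has a number of zeros bounded in terms of
its order and the degree `d` only. -/
lemma exists_zeros_iteratedDeriv {S : Set ℝ} (hSo : IsOpen S) (hSn : S.Nonempty)
    (hSp : IsPreconnected S) {g : ℝ → ℝ} (hg : AnalyticOnNhd ℝ g S) {d : ℕ} (hd : 0 < d)
    {P : MvPolynomial (Fin 2) ℝ} (hP : P ≠ 0) (hPd : P.totalDegree ≤ d)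
    (hPg : ∀ x ∈ S, MvPolynomial.eval ![x, g x] P = 0) (j : ℕ) :
    ∃ T : Finset ℝ, T.card ≤ 4 * d * (1 + 2 * d * j) + d ∧
      ((∀ x ∈ S, iteratedDeriv j g x = 0) ∨ ∀ x ∈ S, iteratedDeriv j g x = 0 → x ∈ T) := by
  by_cases h0 : ∀ x ∈ S, iteratedDeriv j g x = 0
  · exact ⟨∅, by simp, Or.inl h0⟩
  obtain ⟨R, hR, hRd, hRg, x₀, hx₀, hRy⟩ := exists_annihilator_pderiv_ne hSo hSn hg d P hP hPd hPg
  obtain ⟨Q, hQd, hQ⟩ := exists_poly_iteratedDeriv hSo hg hRd hRg j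
  have hQ0 : ∃ x ∈ S, MvPolynomial.eval ![x, g x] Q ≠ 0 := by
    by_contra hcon
    push Not at hcon
    rcases ((analyticOnNhd_evalGraph hg (MvPolynomial.pderiv 1 R)).pow
      (2 * j)).eq_zero_or_eq_zero_of_mul_eq_zero (analyticOnNhd_iteratedDeriv hg j)
      (fun x hx => (hQ x hx).trans (hcon x hx)) hSp with h | h
    · exact pow_ne_zero _ hRy (h x₀ hx₀)
    · exact h0 h
  obtain ⟨T, hT, hT'⟩ := exists_zeros_finset hSp hg hd hR hRd hRg hQd hQ0
  exact ⟨T, hT, Or.inr fun x hx hx0 => hT' x hx (by rw [← hQ x hx, hx0, mul_zero])⟩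

/-! ### Assembly -/

/-- `C^k`-parametrization of algebraic functions: for all `k, d ≥ 1` there is `M = M(k,d)` such
that every real algebraic function `g` of degree `d` on `I = [-1,1]` with `0 ≤ g ≤ 1` and
`|g'| ≤ 1` on `I` admits a partition of `I` into at most `M` closed subintervals `Δⱼ` (with
pairwise disjoint interiors) and `C^k`-charts `ψⱼ : I → Δⱼ` (onto) with each `g ∘ ψⱼ` also a
`C^k`-chart. -/
theorem stmt2 (k d : ℕ) (hk : 0 < k) (hd : 0 < d) :
    ∃ M : ℕ, ∀ g : ℝ → ℝ, IsAlgebraicFunOnI d g →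
      (∀ x ∈ Icc (-1:ℝ) 1, 0 ≤ g x ∧ g x ≤ 1) →
      (∀ x ∈ Icc (-1:ℝ) 1, |deriv g x| ≤ 1) →
      ∃ N : ℕ, N ≤ M ∧ ∃ a b : Fin N → ℝ,
        (∀ j, a j ≤ b j) ∧
        (∀ j j', j ≠ j' → Ioo (a j) (b j) ∩ Ioo (a j') (b j') = ∅) ∧
        (⋃ j, Icc (a j) (b j)) = Icc (-1:ℝ) 1 ∧
        ∃ ψ : Fin N → ℝ → ℝ,
          (∀ j, ψ j '' Icc (-1:ℝ) 1 = Icc (a j) (b j)) ∧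
          (∀ j, IsCkChart k (ψ j)) ∧
          (∀ j, IsCkChart k (g ∘ ψ j)) := by
  set K := 2 * (k.factorial * 2 ^ (k * (k + 1)) * k) with hK
  set Z := ∑ j ∈ Finset.Icc 2 (k + 1), (4 * d * (1 + 2 * d * j) + d) with hZ
  refine ⟨(Z + 1) * K, fun g hgalg hg01 hg1 => ?_⟩
  obtain ⟨hg, P, hP, hPd, hPg⟩ := hgalg
  have hgS : AnalyticOnNhd ℝ g (Ioo (-1) 1) := hg.mono Ioo_subset_Icc_self
  choose T hTcard hT using exists_zeros_iteratedDeriv (S := Ioo (-1:ℝ) 1) isOpen_Ioo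
    ⟨0, by norm_num⟩ isPreconnected_Ioo hgS hd hP hPd
    (fun x hx => hPg x (Ioo_subset_Icc_self hx))
  set U := (Finset.Icc 2 (k + 1)).biUnion T with hU
  have hUcard : U.card ≤ Z :=
    Finset.card_biUnion_le.trans (Finset.sum_le_sum fun j _ => hTcard j)
  obtain ⟨N, hN, hchain⟩ := ChartChain.of_finset (k := k) (g := g) K U (-1) 1 (by norm_num) (by
    intro a b ha hab hb hdis
    rcases hab.eq_or_lt with rfl | hab
    · exact ⟨0, Nat.zero_le _, fun _ => a, rfl, rfl, fun i hi => absurd hi (Nat.not_lt_zero i)⟩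
    refine ⟨K, le_rfl, gapChain hk hab ha hb hg hg01 hg1 fun j hj hjk => ?_⟩
    have hsub : Ioo a b ⊆ Ioo (-1:ℝ) 1 := Ioo_subset_Ioo ha hb
    rcases hT j with h0 | h0
    · exact Or.inl fun x hx => (h0 x (hsub hx)).ge
    have hne : ∀ x ∈ Ioo a b, iteratedDeriv j g x ≠ 0 := by
      intro x hx hx0
      refine Set.disjoint_left.1 hdis hx ?_
      rw [Finset.mem_coe, hU, Finset.mem_biUnion]
      exact ⟨j, Finset.mem_Icc.2 ⟨hj, hjk⟩, h0 x (hsub hx) hx0⟩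
    have hcont : ContinuousOn (iteratedDeriv j g) (Ioo a b) :=
      ((analyticOnNhd_iteratedDeriv hgS j).mono hsub).continuousOn
    -- a continuous function without zeros on an interval has constant sign
    by_contra hcon
    push Not at hcon
    obtain ⟨⟨x, hx, hx0⟩, y, hy, hy0⟩ := hcon
    obtain ⟨z, hz, hz0⟩ := isPreconnected_Ioo.intermediate_value hx hy hcont ⟨hx0.le, hy0.le⟩
    exact hne z hz hz0)
  have hNpos : 0 < N := by
    rcases Nat.eq_zero_or_pos N with rfl | h
    · obtain ⟨t, h0, h1, -⟩ := hchain
      rw [h0] at h1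
      norm_num at h1
    · exact h
  exact ⟨N, hN.trans (Nat.mul_le_mul_right K (Nat.add_le_add_right hUcard 1)),
    hchain.toPartition hNpos⟩
end

section
/- For all positive integers k and N there exists a constant M = M(k,N), depending only on k and N, with the following property. Let f : [−1,1] → ℝ be (k+1) times continuously differentiable with |f'(x)| ≤ 1 for all x ∈ [−1,1], and suppose that for every 0 ≤ i ≤ k+1 the zero set {x ∈ [−1,1] : f^{(i)}(x) = 0} has at most N elements. Then there exist an integer m ≤ M, closed subintervals Δ₁,…,Δ_m of [−1,1] with pairwise disjoint interiors whose union is [−1,1], and maps ψ_j : [−1,1] → ℝ with ψ_j([−1,1]) = Δ_j, such that each ψ_j is a C^k-chart and each composition f ∘ ψ_j is a C^k-chart. -/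
/-!
`f` is the restriction of a `C^(k+1)` function `F` on `ℝ` (`exists_contDiff_extension`), so only
ordinary derivatives are needed. Cut `[-1, 1]` at all zeros of `F, F', …, F⁽ᵏ⁺¹⁾`; this leaves a
number of intervals bounded in terms of `k` and `N`.

Let `(u, v)` be such an interval, and `d` the distance of `x` to its endpoints. There
`F', …, F⁽ᵏ⁾` are monotone, so `F⁽ⁱ⁺¹⁾(x)` lies between its values at two points, one on either
side of `x`, at which the mean value theorem bounds it by `4 / d` times the size of `F⁽ⁱ⁾` nearby.
Starting from `|F'| ≤ 1`, induction gives `|F⁽ⁱ⁾(x)| ≤ C d ^ (1 - i)` (`iteratedDeriv_bound`).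

On the half of `(u, v)` adjacent to the endpoint `e`, substitute `x = e + h tᵏ`, `t ∈ [0, 1]`. By the
chain rule the `n`-th derivative of `F (e + h tᵏ)` is of size `t ^ (k - n)`, hence bounded for
`n ≤ k` by a constant depending on `k` only (`comp_pow_bound`). Cutting `[0, 1]` into that many equal
pieces and rescaling each of them to `[-1, 1]` makes all derivatives at most `1`
(`hasParam_monotone`).
-/

open Set

/-! ### Derivative bounds -/

/-- A `C^n` function on a compact interval is the restriction of a `C^n` function on `ℝ`: extend
the top derivative by constants and integrate back. -/
lemma exists_contDiff_extension (n : ℕ) : ∀ f : ℝ → ℝ, ContDiffOn ℝ n f (Icc (-1) 1) →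
    ∃ F : ℝ → ℝ, ContDiff ℝ n F ∧ EqOn f F (Icc (-1) 1) := by
  induction n with
  | zero =>
    intro f hf
    have hle : (-1 : ℝ) ≤ 1 := by norm_num
    refine ⟨IccExtend hle ((Icc (-1) 1).domRestrict f), ?_, ?_⟩
    · rw [Nat.cast_zero, contDiff_zero]
      exact (continuousOn_iff_continuous_domRestrict.1 hf.continuousOn).Icc_extend'
    · intro x hx
      rw [IccExtend_of_mem _ _ hx]
      rfl
  | succ n ih =>
    intro f hf
    have hu : UniqueDiffOn ℝ (Icc (-1 : ℝ) 1) := uniqueDiffOn_Icc (by norm_num)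
    have hf' : ContDiffOn ℝ ((n : ℕ) + 1) f (Icc (-1) 1) := by exact_mod_cast hf
    rw [contDiffOn_succ_iff_derivWithin hu] at hf'
    obtain ⟨G, hG, hfG⟩ := ih _ hf'.2.2
    have hd : ∀ x, HasDerivAt (fun x => f (-1) + ∫ t in (-1 : ℝ)..x, G t) (G x) x := fun x =>
      (intervalIntegral.integral_hasDerivAt_right (hG.continuous.intervalIntegrable _ _)
        (hG.continuous.stronglyMeasurableAtFilter _ _) hG.continuous.continuousAt).const_add _
    refine ⟨fun x => f (-1) + ∫ t in (-1 : ℝ)..x, G t, ?_, ?_⟩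
    · have : ContDiff ℝ ((n : ℕ) + 1) (fun x => f (-1) + ∫ t in (-1 : ℝ)..x, G t) := by
        rw [contDiff_succ_iff_deriv]
        refine ⟨fun x => (hd x).differentiableAt, by simp, ?_⟩
        rw [show deriv (fun x => f (-1) + ∫ t in (-1 : ℝ)..x, G t) = G from
          funext fun x => (hd x).deriv]
        exact hG
      exact_mod_cast this
    · refine eq_of_derivWithin_eq hf'.1
        (fun x _ => (hd x).differentiableAt.differentiableWithinAt) (fun x hx => ?_) (by simp)
      have hxI := Ico_subset_Icc_self hx
      rw [hfG hxI, (hd x).hasDerivWithinAt.derivWithin (hu x hxI)]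

/-- A function with non-vanishing derivative is monotone, so each of its values lies between
those at two neighbouring points. -/
lemma abs_le_of_deriv_ne_zero {g : ℝ → ℝ} (hg : Differentiable ℝ g) {u v : ℝ}
    (hne : ∀ x ∈ Ioo u v, deriv g x ≠ 0) {y x z B : ℝ} (hy : y ∈ Ioo u v) (hz : z ∈ Ioo u v)
    (hyx : y ≤ x) (hxz : x ≤ z) (hBy : |g y| ≤ B) (hBz : |g z| ≤ B) : |g x| ≤ B := by
  have hx : x ∈ Ioo u v := ⟨hy.1.trans_le hyx, hxz.trans_lt hz.2⟩
  rw [abs_le] at *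
  rcases hasDerivWithinAt_forall_lt_or_forall_gt_of_forall_ne (convex_Ioo u v)
    (fun x _ => (hg x).hasDerivAt.hasDerivWithinAt) hne with h | h
  · have hm := antitoneOn_of_deriv_nonpos (convex_Ioo u v) hg.continuous.continuousOn
      hg.differentiableOn (fun x hx => (h x (interior_subset hx)).le)
    have h1 := hm hy hx hyx
    have h2 := hm hx hz hxz
    constructor <;> linarith
  · have hm := monotoneOn_of_deriv_nonneg (convex_Ioo u v) hg.continuous.continuousOn
      hg.differentiableOn (fun x hx => (h x (interior_subset hx)).le)
    have h1 := hm hy hx hyx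
    have h2 := hm hx hz hxz
    constructor <;> linarith

/-- If `|F'| ≤ 1` and the higher derivatives do not vanish on `(u, v)`, then `F⁽ⁱ⁺¹⁾` grows at most
like the `i`-th inverse power of the distance `d` to the endpoints. -/
lemma iteratedDeriv_bound {k : ℕ} {F : ℝ → ℝ} (hF : ContDiff ℝ (k + 1 : ℕ) F) {u v : ℝ}
    (h1 : ∀ x ∈ Ioo u v, |deriv F x| ≤ 1)
    (hne : ∀ i ≤ k + 1, ∀ x ∈ Ioo u v, iteratedDeriv i F x ≠ 0) (i : ℕ) (hi : i + 1 ≤ k) :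
    ∀ x d : ℝ, 0 < d → u ≤ x - d → x + d ≤ v →
      |iteratedDeriv (i + 1) F x| * d ^ i ≤ 2 ^ ((i + 1) ^ 2) := by
  induction i with
  | zero =>
    intro x d hd hu hv
    have := h1 x ⟨by linarith, by linarith⟩
    simp only [zero_add, iteratedDeriv_one, pow_zero, mul_one]
    norm_num
    linarith
  | succ i ih =>
    intro x d hd hu hv
    have ih := ih (by omega)
    have hdiff : ∀ j ≤ k, Differentiable ℝ (iteratedDeriv j F) := fun j hj =>
      hF.differentiable_iteratedDeriv j (by exact_mod_cast (by omega : j < k + 1))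
    -- By the mean value theorem, on either side of `x` the derivative is controlled somewhere.
    have key : ∀ p, x - d / 2 ≤ p → p + d / 2 ≤ x + d / 2 → ∃ c ∈ Ioo p (p + d / 2),
        |iteratedDeriv (i + 1 + 1) F c| ≤ 2 ^ ((i + 1 + 1) ^ 2) / d ^ (i + 1) := by
      intro p hp hp'
      obtain ⟨c, hc, hce⟩ := exists_deriv_eq_slope (iteratedDeriv (i + 1) F)
        (show p < p + d / 2 by linarith) (hdiff _ (by omega)).continuous.continuousOn
        (hdiff _ (by omega)).differentiableOn
      refine ⟨c, hc, ?_⟩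
      rw [← iteratedDeriv_succ] at hce
      have hA := ih p (d / 2) (by linarith) (by linarith) (by linarith)
      have hB := ih (p + d / 2) (d / 2) (by linarith) (by linarith) (by linarith)
      have hAB : |iteratedDeriv (i + 1) F (p + d / 2) - iteratedDeriv (i + 1) F p| * (d / 2) ^ i
          ≤ 2 * 2 ^ ((i + 1) ^ 2) := by
        have := mul_le_mul_of_nonneg_right (abs_sub (iteratedDeriv (i + 1) F (p + d / 2))
          (iteratedDeriv (i + 1) F p)) (show 0 ≤ (d / 2) ^ i by positivity)
        linarith
      rw [hce, abs_div, show p + d / 2 - p = d / 2 by ring, abs_of_pos (show 0 < d / 2 by linarith),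
        div_le_div_iff₀ (by positivity) (by positivity)]
      calc |iteratedDeriv (i + 1) F (p + d / 2) - iteratedDeriv (i + 1) F p| * d ^ (i + 1)
          = (|iteratedDeriv (i + 1) F (p + d / 2) - iteratedDeriv (i + 1) F p| * (d / 2) ^ i)
              * (2 ^ i * d) := by
            rw [div_pow, pow_succ d]; field_simp
        _ ≤ 2 * 2 ^ ((i + 1) ^ 2) * (2 ^ i * d) := by gcongr
        _ = 2 ^ ((i + 1) ^ 2 + i + 2) * (d / 2) := by ring
        _ ≤ 2 ^ ((i + 1 + 1) ^ 2) * (d / 2) := by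
            gcongr
            · norm_num
            · nlinarith
    obtain ⟨y, hy, hyB⟩ := key (x - d / 2) le_rfl (by linarith)
    obtain ⟨z, hz, hzB⟩ := key x (by linarith) le_rfl
    rw [← le_div_iff₀ (by positivity)]
    have hne' : ∀ x ∈ Ioo u v, deriv (iteratedDeriv (i + 1 + 1) F) x ≠ 0 := by
      intro x hx
      rw [← iteratedDeriv_succ]
      exact hne _ (by omega) x hx
    refine abs_le_of_deriv_ne_zero (hdiff _ (by omega)) hne' (y := y) (z := z) ?_ ?_ ?_ ?_ hyB hzB
    · exact ⟨by linarith [hy.1], by linarith [hy.2]⟩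
    · exact ⟨by linarith [hz.1], by linarith [hz.2]⟩
    · linarith [hy.2]
    · exact hz.1.le

/-- The power substitution `x = e + h tᵏ` tames a function whose `i`-th derivative is of size
`|x - e| ^ (1 - i)`. Rescaling `x - e` to `1`, the outer derivatives become bounded, while those of
`(t / s) ^ k` at `t = s` are of size `s ^ (-n)`; the factor `s ^ k` compensates. -/
lemma comp_pow_bound {k : ℕ} {F : ℝ → ℝ} (hF : ContDiff ℝ k F) {e h s B : ℝ}
    (hh : h ≠ 0) (hh1 : |h| ≤ 1) (hs : 0 < s) (hs1 : s ≤ 1)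
    (hB0 : |F (e + h * s ^ k) - F e| ≤ B * |h * s ^ k|)
    (hB : ∀ i, 1 ≤ i → i ≤ k →
      |iteratedDeriv i F (e + h * s ^ k)| * |h * s ^ k| ^ (i - 1) ≤ B)
    (n : ℕ) (hn : 1 ≤ n) (hnk : n ≤ k) :
    |iteratedDeriv n (fun t => F (e + h * t ^ k)) s| ≤ n.factorial * B * k ^ n := by
  set c : ℝ := h * s ^ k with hc
  have hc0 : c ≠ 0 := by positivity
  let G : ℝ → ℝ := fun y => c⁻¹ * (-F e + F (e + c * y))
  let Φ : ℝ → ℝ := fun t => (s ^ k)⁻¹ * t ^ k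
  have hG : ContDiff ℝ k G := by fun_prop
  have hΦ : ContDiff ℝ k Φ := by fun_prop
  have hΦs : Φ s = 1 := inv_mul_cancel₀ (by positivity)
  have hcomp : (fun t => F (e + h * t ^ k)) = fun t => F e + c * (G ∘ Φ) t := by
    funext t
    have : c * ((s ^ k)⁻¹ * t ^ k) = h * t ^ k := by rw [hc]; field_simp
    simp only [G, Φ, Function.comp, this]
    field_simp
    ring
  have hGi : ∀ i, i ≤ n → |iteratedDeriv i G 1| ≤ B := by
    intro i hi
    rcases Nat.eq_zero_or_pos i with rfl | hi0
    · simp only [iteratedDeriv_zero, G, mul_one, abs_mul, abs_inv]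
      rw [inv_mul_le_iff₀ (by positivity), neg_add_eq_sub, mul_comm]
      exact hB0
    · have hFc : ContDiff ℝ i (fun z => F (e + z)) := by
        have : ContDiff ℝ i F := hF.of_le (by exact_mod_cast hi.trans hnk)
        fun_prop
      have : iteratedDeriv i G 1 = c⁻¹ * (c ^ i * iteratedDeriv i F (e + c)) := by
        simp only [G]
        rw [iteratedDeriv_const_mul_field, iteratedDeriv_const_add hi0,
          iteratedDeriv_comp_const_mul hFc c, iteratedDeriv_comp_const_add]
        simp
      rw [this]
      obtain ⟨j, rfl⟩ : ∃ j, i = j + 1 := ⟨i - 1, by omega⟩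
      have h2 := hB (j + 1) (by omega) (hi.trans hnk)
      rw [show c⁻¹ * (c ^ (j + 1) * iteratedDeriv (j + 1) F (e + c)) =
        iteratedDeriv (j + 1) F (e + c) * c ^ j by rw [pow_succ]; field_simp, abs_mul, abs_pow]
      simpa using h2
  have hΦi : ∀ i, 1 ≤ i → i ≤ n → |iteratedDeriv i Φ s| ≤ (k / s) ^ i := by
    intro i _ hi
    simp only [Φ]
    rw [iteratedDeriv_const_mul_field, iteratedDeriv_pow, abs_of_nonneg (by positivity)]
    have hd : ((k.descFactorial i : ℕ) : ℝ) ≤ (k : ℝ) ^ i := by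
      exact_mod_cast Nat.descFactorial_le_pow k i
    have hsk : s ^ k = s ^ (k - i) * s ^ i := by rw [← pow_add]; congr 1; omega
    rw [hsk, div_pow, le_div_iff₀ (by positivity)]
    calc _ = ((k.descFactorial i : ℕ) : ℝ) := by field_simp
      _ ≤ _ := hd
  have hmain := norm_iteratedFDeriv_comp_le hG hΦ (n := n) (by exact_mod_cast hnk) s (C := B)
    (D := k / s) (by
      intro i hi
      rw [norm_iteratedFDeriv_eq_norm_iteratedDeriv, hΦs]
      exact hGi i hi) (by
      intro i hi1 hi
      rw [norm_iteratedFDeriv_eq_norm_iteratedDeriv]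
      exact hΦi i hi1 hi)
  rw [norm_iteratedFDeriv_eq_norm_iteratedDeriv, Real.norm_eq_abs] at hmain
  rw [hcomp, iteratedDeriv_const_add (by omega), iteratedDeriv_const_mul_field, abs_mul]
  have hcs : |c| ≤ s ^ n := by
    rw [hc, abs_mul, abs_of_pos (show 0 < s ^ k by positivity)]
    calc |h| * s ^ k ≤ 1 * s ^ n := by
          gcongr ?_ * ?_
          exact pow_le_pow_of_le_one hs.le hs1 hnk
      _ = s ^ n := one_mul _
  calc |c| * |iteratedDeriv n (G ∘ Φ) s| ≤ s ^ n * (n.factorial * B * (k / s) ^ n) := by gcongr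
    _ = n.factorial * B * k ^ n := by rw [div_pow]; field_simp

/-! ### Charts and partitions -/

lemma IsCkChart.congr {k : ℕ} {f g : ℝ → ℝ} (hg : IsCkChart k g) (h : EqOn f g (Icc (-1) 1)) :
    IsCkChart k f := by
  refine ⟨hg.1.congr h, fun x hx => ?_, fun i h1 hi x hx => ?_⟩
  · rw [h hx, h (show (0 : ℝ) ∈ Icc (-1 : ℝ) 1 by constructor <;> norm_num)]
    exact hg.2.1 x hx
  · rw [iteratedDerivWithin_congr h hx]
    exact hg.2.2 i h1 hi x hx

lemma isCkChart_of_contDiff {k : ℕ} (hk : 1 ≤ k) {g : ℝ → ℝ} (hg : ContDiff ℝ k g)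
    (hb : ∀ i, 1 ≤ i → i ≤ k → ∀ x ∈ Icc (-1 : ℝ) 1, |iteratedDeriv i g x| ≤ 1) :
    IsCkChart k g := by
  refine ⟨hg.contDiffOn, fun x hx => ?_, fun i h1 hi x hx => ?_⟩
  · have hd : Differentiable ℝ g := hg.differentiable (by exact_mod_cast (by omega : k ≠ 0))
    have := (convex_Icc (-1 : ℝ) 1).norm_image_sub_le_of_norm_deriv_le (f := g) (C := 1)
      (x := 0) (y := x) (fun x _ => hd x)
      (fun x hx => by simpa using hb 1 le_rfl hk x hx) (by constructor <;> norm_num) hx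
    simp only [Real.norm_eq_abs, sub_zero, one_mul] at this
    exact this.trans (abs_le.2 hx)
  · rw [iteratedDerivWithin_eq_iteratedDeriv (uniqueDiffOn_Icc (by norm_num))
      (hg.contDiffAt.of_le (by exact_mod_cast hi)) hx]
    exact hb i h1 hi x hx

/-- Shrinking the parameter by a small factor `δ` turns a function with bounded derivatives
into a chart. -/
lemma isCkChart_affine {k : ℕ} (hk : 1 ≤ k) {φ : ℝ → ℝ} (hφ : ContDiff ℝ k φ) {K c δ : ℝ}
    (hb : ∀ i, 1 ≤ i → i ≤ k → ∀ x ∈ Icc (0 : ℝ) 1, |iteratedDeriv i φ x| ≤ K)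
    (hδ : 0 ≤ δ) (hδ1 : δ ≤ 1) (hδK : δ * K ≤ 1) (hc0 : 0 ≤ c - δ) (hc1 : c + δ ≤ 1) :
    IsCkChart k (fun t => φ (c + δ * t)) := by
  refine isCkChart_of_contDiff hk (by fun_prop) fun i h1 hi x hx => ?_
  have hmem : c + δ * x ∈ Icc (0 : ℝ) 1 := by
    constructor <;> nlinarith [hx.1, hx.2]
  have hφi : ContDiff ℝ i (fun z => φ (c + z)) := by
    have : ContDiff ℝ i φ := hφ.of_le (by exact_mod_cast hi)
    fun_prop
  rw [iteratedDeriv_comp_const_mul hφi δ, iteratedDeriv_comp_const_add]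
  have hK := hb i h1 hi _ hmem
  rw [abs_mul, abs_of_nonneg (by positivity : 0 ≤ δ ^ i)]
  calc δ ^ i * |iteratedDeriv i φ (c + δ * x)| ≤ δ * K :=
        mul_le_mul (pow_le_of_le_one hδ hδ1 (by omega)) hK (abs_nonneg _) hδ
    _ ≤ 1 := hδK

/-- The interval `[u, v]` can be cut into at most `m` closed intervals, each the image of a
`C^k`-chart `ψ` for which `F ∘ ψ` is a `C^k`-chart too. The pieces are indexed by an arbitrary
finite type, so that partitions are concatenated by taking disjoint sums. -/
def HasParam (k : ℕ) (F : ℝ → ℝ) (u v : ℝ) (m : ℕ) : Prop :=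
  ∃ (ι : Type) (_ : Fintype ι), Fintype.card ι ≤ m ∧ ∃ a b : ι → ℝ,
    (∀ j, a j ≤ b j) ∧
    (∀ j j', j ≠ j' → Ioo (a j) (b j) ∩ Ioo (a j') (b j') = ∅) ∧
    (⋃ j, Icc (a j) (b j)) = Icc u v ∧
    ∃ ψ : ι → ℝ → ℝ,
      (∀ j, ψ j '' Icc (-1 : ℝ) 1 = Icc (a j) (b j)) ∧
      (∀ j, IsCkChart k (ψ j)) ∧
      (∀ j, IsCkChart k (F ∘ ψ j))

lemma HasParam.trans {k : ℕ} {F : ℝ → ℝ} {u w v : ℝ} {m n : ℕ} (h1 : HasParam k F u w m)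
    (h2 : HasParam k F w v n) (huw : u ≤ w) (hwv : w ≤ v) : HasParam k F u v (m + n) := by
  obtain ⟨ι, _, hc, a, b, hab, hd, hU, ψ, hi, hψ, hF⟩ := h1
  obtain ⟨ι', _, hc', a', b', hab', hd', hU', ψ', hi', hψ', hF'⟩ := h2
  have hb : ∀ j, b j ≤ w := fun j =>
    (hU.subset (mem_iUnion.2 ⟨j, right_mem_Icc.2 (hab j)⟩)).2
  have ha' : ∀ j, w ≤ a' j := fun j =>
    (hU'.subset (mem_iUnion.2 ⟨j, left_mem_Icc.2 (hab' j)⟩)).1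
  have hcross : ∀ j j', Ioo (a j) (b j) ∩ Ioo (a' j') (b' j') = ∅ := by
    intro j j'
    ext x
    simp only [mem_inter_iff, mem_Ioo, mem_empty_iff_false, iff_false]
    rintro ⟨⟨_, h⟩, h', _⟩
    linarith [hb j, ha' j']
  refine ⟨ι ⊕ ι', inferInstance, by simpa using by omega, Sum.elim a a', Sum.elim b b', ?_, ?_, ?_,
    Sum.elim ψ ψ', ?_, ?_, ?_⟩
  · rintro (j | j)
    exacts [hab j, hab' j]
  · rintro (j | j) (j' | j') hne
    · exact hd j j' fun h => hne (by rw [h])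
    · exact hcross j j'
    · rw [inter_comm]
      exact hcross j' j
    · exact hd' j j' fun h => hne (by rw [h])
  · rw [iUnion_sum]
    simp only [Sum.elim_inl, Sum.elim_inr]
    rw [hU, hU', Icc_union_Icc_eq_Icc huw hwv]
  · rintro (j | j)
    exacts [hi j, hi' j]
  · rintro (j | j)
    exacts [hψ j, hψ' j]
  · rintro (j | j)
    exacts [hF j, hF' j]

lemma HasParam.mono {k : ℕ} {F : ℝ → ℝ} {u v : ℝ} {m n : ℕ} (h : HasParam k F u v m)
    (hmn : m ≤ n) : HasParam k F u v n := by
  obtain ⟨ι, i, hc, h⟩ := h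
  exact ⟨ι, i, hc.trans hmn, h⟩

lemma hasParam_piece {k : ℕ} (hk : 1 ≤ k) {F ψ : ℝ → ℝ} (hψ : ContDiff ℝ k ψ)
    (hFψ : ContDiff ℝ k (F ∘ ψ)) (hmono : MonotoneOn ψ (Icc 0 1)) {K c δ : ℝ}
    (hb : ∀ i, 1 ≤ i → i ≤ k → ∀ x ∈ Icc (0 : ℝ) 1, |iteratedDeriv i ψ x| ≤ K)
    (hbF : ∀ i, 1 ≤ i → i ≤ k → ∀ x ∈ Icc (0 : ℝ) 1, |iteratedDeriv i (F ∘ ψ) x| ≤ K)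
    (hδ : 0 ≤ δ) (hδ1 : δ ≤ 1) (hδK : δ * K ≤ 1) (hc0 : 0 ≤ c - δ) (hc1 : c + δ ≤ 1) :
    HasParam k F (ψ (c - δ)) (ψ (c + δ)) 1 := by
  have hle : ψ (c - δ) ≤ ψ (c + δ) :=
    hmono ⟨hc0, by linarith⟩ ⟨by linarith, hc1⟩ (by linarith)
  refine ⟨Unit, inferInstance, by simp, fun _ => ψ (c - δ), fun _ => ψ (c + δ), fun _ => hle,
    fun j j' hne => (hne rfl).elim, iUnion_const _, fun _ t => ψ (c + δ * t), fun _ => ?_,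
    fun _ => isCkChart_affine hk hψ hb hδ hδ1 hδK hc0 hc1,
    fun _ => isCkChart_affine hk hFψ hbF hδ hδ1 hδK hc0 hc1⟩
  apply Subset.antisymm
  · rintro _ ⟨t, ht, rfl⟩
    have h1 : c - δ ≤ c + δ * t := by nlinarith [ht.1]
    have h2 : c + δ * t ≤ c + δ := by nlinarith [ht.2]
    exact ⟨hmono ⟨hc0, by linarith⟩ ⟨by linarith, by linarith⟩ h1,
      hmono ⟨by linarith, by linarith⟩ ⟨by linarith, hc1⟩ h2⟩
  · have hcont : ContinuousOn (fun t => ψ (c + δ * t)) (Icc (-1) 1) :=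
      (hψ.continuous.comp (by fun_prop)).continuousOn
    have := intermediate_value_Icc (show (-1 : ℝ) ≤ 1 by norm_num) hcont
    simpa [sub_eq_add_neg] using this

/-- Cutting the parameter interval `[0, 1]` into `q` equal parts, `q` at least as large as the
derivatives in play, makes every part a chart. -/
lemma hasParam_monotone {k : ℕ} (hk : 1 ≤ k) {F ψ : ℝ → ℝ} (hψ : ContDiff ℝ k ψ)
    (hFψ : ContDiff ℝ k (F ∘ ψ)) (hmono : MonotoneOn ψ (Icc 0 1)) {q : ℕ} (hq : 0 < q)
    (hb : ∀ i, 1 ≤ i → i ≤ k → ∀ x ∈ Icc (0 : ℝ) 1, |iteratedDeriv i ψ x| ≤ q)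
    (hbF : ∀ i, 1 ≤ i → i ≤ k → ∀ x ∈ Icc (0 : ℝ) 1, |iteratedDeriv i (F ∘ ψ) x| ≤ q) :
    HasParam k F (ψ 0) (ψ 1) q := by
  have hq' : (1 : ℝ) ≤ q := by exact_mod_cast hq
  have hpiece : ∀ l : ℕ, l + 1 ≤ q →
      HasParam k F (ψ ((l : ℝ) / q)) (ψ ((l + 1 : ℝ) / q)) 1 := by
    intro l hl
    have hl' : (l : ℝ) + 1 ≤ q := by exact_mod_cast hl
    have e1 : (l : ℝ) / q = (2 * l + 1) / (2 * q) - 1 / (2 * q) := by field_simp; ring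
    have e2 : (l + 1 : ℝ) / q = (2 * l + 1) / (2 * q) + 1 / (2 * q) := by field_simp; ring
    have h0 : 0 ≤ (l : ℝ) / q := by positivity
    have h1 : (l + 1 : ℝ) / q ≤ 1 := by rw [div_le_one (by linarith)]; exact hl'
    rw [e1] at h0 ⊢
    rw [e2] at h1 ⊢
    refine hasParam_piece hk hψ hFψ hmono hb hbF (by positivity) ?_ ?_ h0 h1
    · rw [div_le_one (by linarith)]; linarith
    · rw [div_mul_eq_mul_div, div_le_one (by linarith)]; linarith
  have hall : ∀ l : ℕ, l + 1 ≤ q → HasParam k F (ψ 0) (ψ ((l + 1 : ℝ) / q)) (l + 1) := by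
    intro l
    induction l with
    | zero =>
      intro hl
      simpa using hpiece 0 hl
    | succ l ih =>
      intro hl
      have hl' : (l : ℝ) + 1 + 1 ≤ q := by exact_mod_cast hl
      have h1 : (l + 1 + 1 : ℝ) / q ≤ 1 := by rw [div_le_one (by linarith)]; exact hl'
      have h2 : (l + 1 : ℝ) / q ≤ (l + 1 + 1 : ℝ) / q := by gcongr; linarith
      have h3 : (0 : ℝ) ≤ (l + 1 : ℝ) / q := by positivity
      have := hpiece (l + 1) hl
      push_cast at this ⊢
      exact (ih (by omega)).trans this
        (hmono ⟨le_rfl, by norm_num⟩ ⟨h3, by linarith⟩ h3)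
        (hmono ⟨h3, by linarith⟩ ⟨by linarith, h1⟩ h2)
  obtain ⟨r, rfl⟩ : ∃ r, q = r + 1 := ⟨q - 1, by omega⟩
  have := hall r le_rfl
  push_cast at this
  rwa [div_self (by positivity)] at this

lemma hasParam_antitone {k : ℕ} (hk : 1 ≤ k) {F ψ : ℝ → ℝ} (hψ : ContDiff ℝ k ψ)
    (hFψ : ContDiff ℝ k (F ∘ ψ)) (hanti : AntitoneOn ψ (Icc 0 1)) {q : ℕ} (hq : 0 < q)
    (hb : ∀ i, 1 ≤ i → i ≤ k → ∀ x ∈ Icc (0 : ℝ) 1, |iteratedDeriv i ψ x| ≤ q)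
    (hbF : ∀ i, 1 ≤ i → i ≤ k → ∀ x ∈ Icc (0 : ℝ) 1, |iteratedDeriv i (F ∘ ψ) x| ≤ q) :
    HasParam k F (ψ 1) (ψ 0) q := by
  have hmem : ∀ x ∈ Icc (0 : ℝ) 1, 1 - x ∈ Icc (0 : ℝ) 1 := fun x hx =>
    ⟨by linarith [hx.2], by linarith [hx.1]⟩
  have hrefl : ∀ φ : ℝ → ℝ,
      (∀ i, 1 ≤ i → i ≤ k → ∀ x ∈ Icc (0 : ℝ) 1, |iteratedDeriv i φ x| ≤ q) →
      ∀ i, 1 ≤ i → i ≤ k → ∀ x ∈ Icc (0 : ℝ) 1,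
        |iteratedDeriv i (fun t => φ (1 - t)) x| ≤ q := by
    intro φ h i h1 hi x hx
    rw [iteratedDeriv_comp_const_sub]
    simpa [abs_mul] using h i h1 hi _ (hmem x hx)
  have := hasParam_monotone (F := F) hk (ψ := fun t => ψ (1 - t)) (by fun_prop)
    (hFψ.comp (contDiff_const.sub contDiff_id))
    (fun x hx y hy hxy => hanti (hmem y hy) (hmem x hx) (by linarith)) hq (hrefl _ hb)
    (hrefl _ hbF)
  simpa using this

/-! ### Zero-free intervals and the final partition -/

/-- A bound for the derivatives of order `1, …, k` of both `e + h tᵏ` and its composition with `F`;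
also the number of pieces into which each half of a zero-free interval is cut. -/
def pieceCount (k : ℕ) : ℕ := k.factorial * 2 ^ (k ^ 2) * k ^ k

lemma pieceCount_pos {k : ℕ} (hk : 1 ≤ k) : 0 < pieceCount k := by
  unfold pieceCount; positivity

lemma pow_chart_bound {k : ℕ} (hk : 1 ≤ k) {e h : ℝ} (hh1 : |h| ≤ 1) (n : ℕ) (hn : 1 ≤ n)
    (hnk : n ≤ k) (s : ℝ) (hs : s ∈ Icc (0 : ℝ) 1) :
    |iteratedDeriv n (fun t => e + h * t ^ k) s| ≤ pieceCount k := by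
  rw [iteratedDeriv_const_add (by omega), iteratedDeriv_const_mul_field, iteratedDeriv_pow,
    abs_mul, abs_of_nonneg (a := _ * _) (mul_nonneg (by positivity) (pow_nonneg hs.1 _))]
  have h1 : k.descFactorial n ≤ pieceCount k := by
    calc k.descFactorial n ≤ k ^ n := Nat.descFactorial_le_pow k n
      _ ≤ k ^ k := Nat.pow_le_pow_right hk hnk
      _ ≤ pieceCount k := Nat.le_mul_of_pos_left _ (by positivity)
  have h2 : s ^ (k - n) ≤ 1 := pow_le_one₀ hs.1 hs.2
  calc |h| * (k.descFactorial n * s ^ (k - n)) ≤ 1 * ((pieceCount k : ℝ) * 1) :=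
        mul_le_mul hh1 (mul_le_mul (by exact_mod_cast h1) h2 (pow_nonneg hs.1 _) (by positivity))
          (mul_nonneg (by positivity) (pow_nonneg hs.1 _)) (by norm_num)
    _ = pieceCount k := by ring

lemma comp_pow_chart_bound {k : ℕ} (hk : 1 ≤ k) {F : ℝ → ℝ} (hF : ContDiff ℝ (k + 1 : ℕ) F)
    {u v : ℝ} (h1 : ∀ x ∈ Icc u v, |deriv F x| ≤ 1)
    (hne : ∀ i ≤ k + 1, ∀ x ∈ Ioo u v, iteratedDeriv i F x ≠ 0)
    {e h : ℝ} (hh : h ≠ 0) (hh1 : |h| ≤ 1) (he : e ∈ Icc u v)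
    (hgeo : ∀ r, 0 < r → r ≤ 1 → u ≤ e + h * r - |h * r| ∧ e + h * r + |h * r| ≤ v)
    (n : ℕ) (hn : 1 ≤ n) (hnk : n ≤ k) (s : ℝ) (hs : s ∈ Icc (0 : ℝ) 1) :
    |iteratedDeriv n (F ∘ fun t => e + h * t ^ k) s| ≤ pieceCount k := by
  have hFk : ContDiff ℝ k F := hF.of_le (by exact_mod_cast Nat.le_succ k)
  have hcont : Continuous fun s => |iteratedDeriv n (F ∘ fun t => e + h * t ^ k) s| :=
    (ContDiff.continuous_iteratedDeriv (n := k) n (hFk.comp (by fun_prop))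
      (by exact_mod_cast hnk)).abs
  -- By continuity it is enough to treat `0 < s`.
  suffices hpos : Ioc (0 : ℝ) 1 ⊆
      {s | |iteratedDeriv n (F ∘ fun t => e + h * t ^ k) s| ≤ pieceCount k} by
    have := closure_minimal hpos (isClosed_le hcont continuous_const)
    rw [closure_Ioc (by norm_num)] at this
    exact this hs
  rintro s ⟨hs0, hs1⟩
  have hr0 : 0 < s ^ k := by positivity
  obtain ⟨hg1, hg2⟩ := hgeo (s ^ k) hr0 (pow_le_one₀ hs0.le hs1)
  have hd : 0 < |h * s ^ k| := by positivity
  have hmain := comp_pow_bound hFk (e := e) (s := s) (B := 2 ^ (k ^ 2)) hh hh1 hs0 hs1 ?_ ?_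
    n hn hnk
  · refine hmain.trans ?_
    have : n.factorial * 2 ^ (k ^ 2) * k ^ n ≤ pieceCount k := by
      unfold pieceCount
      gcongr
    exact_mod_cast this
  · have hdF : Differentiable ℝ F := hF.differentiable (by exact_mod_cast (by omega : k + 1 ≠ 0))
    have := (convex_Icc u v).norm_image_sub_le_of_norm_deriv_le (f := F) (C := 1)
      (fun x _ => hdF x) h1 he (y := e + h * s ^ k) ⟨by linarith, by linarith⟩
    simp only [Real.norm_eq_abs, add_sub_cancel_left, one_mul] at this
    exact this.trans (le_mul_of_one_le_left hd.le (one_le_pow₀ (by norm_num)))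
  · intro i hi hik
    obtain ⟨j, rfl⟩ : ∃ j, i = j + 1 := ⟨i - 1, by omega⟩
    refine (iteratedDeriv_bound hF (fun x hx => h1 x (Ioo_subset_Icc_self hx)) hne j hik _ _
      hd hg1 hg2).trans ?_
    gcongr
    norm_num

/-- An interval on which no derivative vanishes is cut at its midpoint, and either half is
parametrized by a `k`-th power based at its outer endpoint. -/
lemma hasParam_zero_free {k : ℕ} (hk : 1 ≤ k) {F : ℝ → ℝ} (hF : ContDiff ℝ (k + 1 : ℕ) F)
    {u v : ℝ} (hu : -1 ≤ u) (huv : u < v) (hv : v ≤ 1) (h1 : ∀ x ∈ Icc u v, |deriv F x| ≤ 1)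
    (hne : ∀ i ≤ k + 1, ∀ x ∈ Ioo u v, iteratedDeriv i F x ≠ 0) :
    HasParam k F u v (pieceCount k + pieceCount k) := by
  have hFk : ContDiff ℝ k F := hF.of_le (by exact_mod_cast Nat.le_succ k)
  have hk0 : k ≠ 0 := by omega
  set h : ℝ := (v - u) / 2 with hh
  have hpos : 0 < h := by linarith
  have habs : |h| ≤ 1 := by rw [abs_of_pos hpos]; linarith
  have habs' : |-h| ≤ 1 := by rwa [abs_neg]
  have hleft : HasParam k F u (u + h) (pieceCount k) := by
    have := hasParam_monotone hk (F := F) (ψ := fun t => u + h * t ^ k) (by fun_prop)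
      (hFk.comp (by fun_prop))
      (fun x hx y hy hxy => by
        have := pow_le_pow_left₀ hx.1 hxy k
        dsimp only
        gcongr) (pieceCount_pos hk)
      (pow_chart_bound hk habs)
      (comp_pow_chart_bound hk hF h1 hne hpos.ne' habs ⟨le_rfl, huv.le⟩ (fun r hr0 hr1 => by
        rw [abs_of_pos (mul_pos hpos hr0)]
        constructor <;> nlinarith))
    simpa [hk0] using this
  have hright : HasParam k F (u + h) v (pieceCount k) := by
    have := hasParam_antitone hk (F := F) (ψ := fun t => v + -h * t ^ k) (by fun_prop)
      (hFk.comp (by fun_prop))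
      (fun x hx y hy hxy => by
        have := mul_le_mul_of_nonneg_left (pow_le_pow_left₀ hx.1 hxy k) hpos.le
        dsimp only
        linarith) (pieceCount_pos hk)
      (pow_chart_bound hk habs')
      (comp_pow_chart_bound hk hF h1 hne (neg_ne_zero.2 hpos.ne') habs' ⟨huv.le, le_rfl⟩
        (fun r hr0 hr1 => by
          rw [neg_mul, abs_neg, abs_of_pos (mul_pos hpos hr0)]
          constructor <;> nlinarith))
    have e : v + -h = u + h := by rw [hh]; ring
    simpa [hk0, e] using this
  exact hleft.trans hright (by linarith) (by linarith)

/-- Cutting at the points of a finite set `Z`; each cut leaves fewer points of `Z` on either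
side, so the number of pieces at most doubles. -/
lemma hasParam_of_finset {k : ℕ} {F : ℝ → ℝ} {m : ℕ} (Z : Finset ℝ)
    (H : ∀ u v, -1 ≤ u → u < v → v ≤ 1 → (∀ z ∈ Z, z ∉ Ioo u v) → HasParam k F u v m) (r : ℕ) :
    ∀ u v, -1 ≤ u → u < v → v ≤ 1 → ((Z : Set ℝ) ∩ Ioo u v).ncard ≤ r →
      HasParam k F u v (2 ^ r * m) := by
  induction r with
  | zero =>
    intro u v hu huv hv hr
    have hfin : ((Z : Set ℝ) ∩ Ioo u v).Finite := Z.finite_toSet.inter_of_left _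
    have h0 := (ncard_eq_zero hfin).1 (Nat.le_zero.1 hr)
    simpa using H u v hu huv hv fun z hz hz' => by
      have : z ∈ (Z : Set ℝ) ∩ Ioo u v := ⟨hz, hz'⟩
      rwa [h0] at this
  | succ r ih =>
    intro u v hu huv hv hr
    by_cases hz : ∀ z ∈ Z, z ∉ Ioo u v
    · exact (H u v hu huv hv hz).mono (Nat.le_mul_of_pos_left _ (by positivity))
    · push Not at hz
      obtain ⟨z, hzZ, hz⟩ := hz
      have hfin : ((Z : Set ℝ) ∩ Ioo u v).Finite := Z.finite_toSet.inter_of_left _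
      have hsub : ∀ u' v', u ≤ u' → v' ≤ v → z ∉ Ioo u' v' →
          ((Z : Set ℝ) ∩ Ioo u' v').ncard ≤ r := by
        intro u' v' h1 h2 h3
        have : ((Z : Set ℝ) ∩ Ioo u' v').ncard < ((Z : Set ℝ) ∩ Ioo u v).ncard := by
          apply ncard_lt_ncard _ hfin
          refine ⟨inter_subset_inter_right _ (Ioo_subset_Ioo h1 h2), fun h => h3 ?_⟩
          exact (h ⟨hzZ, hz⟩).2
        omega
      have hA := ih u z hu hz.1 (by linarith [hz.2]) (hsub u z le_rfl hz.2.le (by simp))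
      have hB := ih z v (by linarith [hz.1]) hz.2 hv (hsub z v hz.1.le le_rfl (by simp))
      have := hA.trans hB hz.1.le hz.2.le
      rwa [show 2 ^ r * m + 2 ^ r * m = 2 ^ (r + 1) * m by ring] at this

/-- `C^k`-parametrization from zero counting: for all `k, N ≥ 1` there is `M = M(k,N)` such that
every `C^{k+1}` function `f` on `[-1,1]` with `|f'| ≤ 1`, each of whose derivatives
`f, f', …, f⁽ᵏ⁺¹⁾` has at most `N` zeroes in `[-1,1]`, admits a partition of `[-1,1]` into at
most `M` closed subintervals `Δⱼ` (with pairwise disjoint interiors) and `C^k`-charts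
`ψⱼ : [-1,1] → Δⱼ` (onto) with each `f ∘ ψⱼ` also a `C^k`-chart. -/
theorem stmt3 (k N : ℕ) (hk : 0 < k) (hN : 0 < N) :
    ∃ M : ℕ, ∀ f : ℝ → ℝ,
      ContDiffOn ℝ (k + 1) f (Icc (-1) 1) →
      (∀ x ∈ Icc (-1:ℝ) 1, |derivWithin f (Icc (-1) 1) x| ≤ 1) →
      (∀ i ≤ k + 1,
        {x ∈ Icc (-1:ℝ) 1 | iteratedDerivWithin i f (Icc (-1) 1) x = 0}.encard ≤ N) →
      ∃ m : ℕ, m ≤ M ∧ ∃ a b : Fin m → ℝ,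
        (∀ j, a j ≤ b j) ∧
        (∀ j j', j ≠ j' → Ioo (a j) (b j) ∩ Ioo (a j') (b j') = ∅) ∧
        (⋃ j, Icc (a j) (b j)) = Icc (-1:ℝ) 1 ∧
        ∃ ψ : Fin m → ℝ → ℝ,
          (∀ j, ψ j '' Icc (-1:ℝ) 1 = Icc (a j) (b j)) ∧
          (∀ j, IsCkChart k (ψ j)) ∧
          (∀ j, IsCkChart k (f ∘ ψ j)) := by
  refine ⟨2 ^ ((k + 2) * N) * (pieceCount k + pieceCount k), fun f hf hf1 hz => ?_⟩
  obtain ⟨F, hF, hfF⟩ := exists_contDiff_extension (k + 1) f (by exact_mod_cast hf)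
  have hu : UniqueDiffOn ℝ (Icc (-1 : ℝ) 1) := uniqueDiffOn_Icc (by norm_num)
  have hderiv : ∀ i ≤ k + 1, ∀ x ∈ Icc (-1 : ℝ) 1,
      iteratedDerivWithin i f (Icc (-1) 1) x = iteratedDeriv i F x := by
    intro i hi x hx
    rw [iteratedDerivWithin_congr hfF hx, iteratedDerivWithin_eq_iteratedDeriv hu
      (hF.contDiffAt.of_le (by exact_mod_cast hi)) hx]
  have hF1 : ∀ x ∈ Icc (-1 : ℝ) 1, |deriv F x| ≤ 1 := by
    intro x hx
    rw [← iteratedDeriv_one, ← hderiv 1 (by omega) x hx, iteratedDerivWithin_one]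
    exact hf1 x hx
  let S : ℕ → Set ℝ := fun i => {x ∈ Icc (-1 : ℝ) 1 | iteratedDerivWithin i f (Icc (-1) 1) x = 0}
  have hSfin : ∀ i ∈ Finset.range (k + 2), (S i).Finite := fun i hi =>
    finite_of_encard_le_coe (hz i (by have := Finset.mem_range.1 hi; omega))
  classical
  let T : ℕ → Finset ℝ := fun i => if h : (S i).Finite then h.toFinset else ∅
  have hT : ∀ i ∈ Finset.range (k + 2), (T i : Set ℝ) = S i := by
    intro i hi
    simp only [T, dif_pos (hSfin i hi), Finite.coe_toFinset]
  let Z := (Finset.range (k + 2)).biUnion T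
  have hZ : Z.card ≤ (k + 2) * N := by
    have := Finset.card_biUnion_le_card_mul (Finset.range (k + 2)) T N fun i hi => by
      have h1 := hz i (by have := Finset.mem_range.1 hi; omega)
      change (S i).encard ≤ N at h1
      rw [← hT i hi, encard_coe_eq_coe_finsetCard] at h1
      exact_mod_cast h1
    simpa using this
  have hparam : HasParam k F (-1) 1 (2 ^ ((k + 2) * N) * (pieceCount k + pieceCount k)) := by
    refine hasParam_of_finset Z (fun u v hu huv hv hfree => ?_) _ (-1) 1 le_rfl (by norm_num)
      le_rfl ?_
    · refine hasParam_zero_free hk hF hu huv hv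
        (fun x hx => hF1 x ⟨hu.trans hx.1, hx.2.trans hv⟩) fun i hi x hx h0 => ?_
      have hxI : x ∈ Icc (-1 : ℝ) 1 := ⟨hu.trans hx.1.le, hx.2.le.trans hv⟩
      have hir : i ∈ Finset.range (k + 2) := Finset.mem_range.2 (by omega)
      refine hfree x (Finset.mem_biUnion.2 ⟨i, hir, ?_⟩) hx
      rw [← Finset.mem_coe, hT i hir]
      exact ⟨hxI, by rw [hderiv i hi x hxI, h0]⟩
    · refine (ncard_le_ncard inter_subset_left Z.finite_toSet).trans ?_
      rwa [ncard_coe_finset]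
  obtain ⟨ι, _, hc, a, b, hab, hd, hU, ψ, hi, hψ, hFψ⟩ := hparam
  let e := (Fintype.equivFin ι).symm
  refine ⟨Fintype.card ι, hc, a ∘ e, b ∘ e, fun j => hab _,
    fun j j' hne => hd _ _ (e.injective.ne hne), ?_, fun j => ψ (e j), fun j => hi _,
    fun j => hψ _, fun j => ?_⟩
  · rw [← hU]
    exact e.surjective.iUnion_comp fun j => Icc (a j) (b j)
  · refine (hFψ (e j)).congr fun t ht => hfF ?_
    rw [← hU]
    exact mem_iUnion.2 ⟨e j, (hi (e j)).subset (mem_image_of_mem _ ht)⟩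
end

section
/- Let n and m be positive integers. Set D_n(l) = C(n+l, n) and L_n(l) = C(n+l−1, n−1) (binomial coefficients), let k be the unique nonnegative integer with D_n(k) ≤ m < D_n(k+1), and set e = Σ_{l=0}^{k} l·L_n(l) + (k+1)·(m − D_n(k)). Then there exists a constant c = c(n,m), depending only on n and m, with the following property: for every C^∞ map φ = (φ₁,…,φ_m) : [−1,1]^n → ℝ^m, setting B = max(1, sup{|∂^α φ_i(x)| : 1 ≤ i ≤ m, α a multi-index with |α| ≤ k+1, x ∈ [−1,1]^n}), for every 0 < r < 1, every point x₀ ∈ ℝ^n, and all points z¹,…,z^m ∈ [−1,1]^n lying in the closed Euclidean ball of radius r centered at x₀, the m×m determinant Δ = det(φ_i(z^j))_{1 ≤ i,j ≤ m} satisfies |Δ| ≤ c · B^m · r^e. -/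
/-!
Expand each `φᵢ(zʲ)` by Taylor's formula of order `k` around one of the points, `p = z⁰`, which is
at distance at most `2r` from all the others (`taylor_remainder_le`). The row of the transposed
matrix belonging to `zʲ` is then the sum, over the monomials `q` of degree `≤ k`, of
`q(zʲ - p) · a_q`, where the vector `a_q` does not depend on `j`, plus a remainder of size
`O(B r^(k+1))`. Multilinearity of the determinant turns `Δ` into a sum over all ways `f` of choosing
one summand in each row.

A choice that uses the same monomial in two rows contributes `0`, because these two rows are then
proportional to the same `a_q`. For any other choice the Leibniz formula
(`abs_det_le_of_rows`) bounds the contribution by a constant times `B^m r^w`, where `w` adds up the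
degrees of the chosen monomials, a remainder counting `k + 1`. Every monomial being available only
once, `w` is smallest when all `D_n(k)` monomials are used and the remaining `m - D_n(k)` rows
contribute their remainder; that minimum is `e` (`le_sum_weight`). Since `r < 1`, each contribution
is `O(B^m r^e)`, and the number of choices depends only on `n` and `m`.
-/

open Set

/-! ### Monomials and the minimal total degree -/


/-- The monomials of degree at most `k` in `n` variables: a degree `l` together with a multiset of
`l` variables. -/
abbrev Mono (n k : ℕ) : Type := Σ l : Fin (k + 1), Sym (Fin n) (l : ℕ)

/-- The value of a monomial at `h`. -/
def Mono.eval {n k : ℕ} (q : Mono n k) (h : Fin n → ℝ) : ℝ :=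
  ((q.2 : Multiset (Fin n)).map h).prod

/-- The order of vanishing in `r` of a summand of the Taylor expansion: the degree for a monomial,
and `k + 1` for the remainder, which is encoded by `none`. -/
def weight {n k : ℕ} : Option (Mono n k) → ℕ
  | none => k + 1
  | some q => q.1

lemma weight_le {n k : ℕ} (o : Option (Mono n k)) : weight o ≤ k + 1 := by
  cases o with
  | none => exact le_rfl
  | some q => exact q.1.2.le

lemma card_sym_fin {n : ℕ} (hn : 0 < n) (l : ℕ) :
    Fintype.card (Sym (Fin n) l) = (n + l - 1).choose (n - 1) := by
  rw [Sym.card_sym_eq_choose, Fintype.card_fin]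
  exact Nat.choose_symm_of_eq_add (by omega)

/-- `∑_{l ≤ k} L_n(l) = D_n(k)`. -/
lemma sum_choose {n : ℕ} (hn : 0 < n) (k : ℕ) :
    ∑ l ∈ Finset.range (k + 1), (n + l - 1).choose (n - 1) = (n + k).choose n := by
  obtain ⟨n, rfl⟩ : ∃ a, n = a + 1 := ⟨n - 1, by omega⟩
  have h := Nat.sum_range_add_choose k n
  rw [show n + 1 + k = k + n + 1 by ring, ← h]
  refine Finset.sum_congr rfl fun l _ => ?_
  congr 1
  omega

lemma sum_codegree {n : ℕ} (hn : 0 < n) (k : ℕ) :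
    ∑ q : Mono n k, (k + 1 - (q.1 : ℕ)) + ∑ l ∈ Finset.range (k + 1), l * (n + l - 1).choose (n - 1)
      = (k + 1) * (n + k).choose n := by
  rw [Fintype.sum_sigma]
  simp only [Finset.sum_const, Finset.card_univ, card_sym_fin hn, smul_eq_mul]
  rw [← Fin.sum_univ_eq_sum_range (fun l => l * (n + l - 1).choose (n - 1)),
    ← Finset.sum_add_distrib, ← sum_choose hn k, Finset.mul_sum,
    ← Fin.sum_univ_eq_sum_range (fun l => (k + 1) * (n + l - 1).choose (n - 1))]
  refine Finset.sum_congr rfl fun l _ => ?_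
  rw [mul_comm, ← add_mul, Nat.sub_add_cancel l.2.le]

/-- The exponent `e` is a lower bound for the total weight of a choice that uses no monomial twice.
The proof is by counting the deficits `k + 1 - weight`: they vanish for the remainder, so their sum
over the choice is at most their sum over all monomials. -/
lemma le_sum_weight {n m k : ℕ} (hn : 0 < n) (hk1 : (n + k).choose n ≤ m)
    (f : Fin m → Option (Mono n k)) (hf : ∀ a b q, f a = some q → f b = some q → a = b) :
    (∑ l ∈ Finset.range (k + 1), l * (n + l - 1).choose (n - 1)) +
      (k + 1) * (m - (n + k).choose n) ≤ ∑ j, weight (f j) := by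
  classical
  have h1 : ∑ j, (k + 1 - weight (f j)) ≤ ∑ q : Mono n k, (k + 1 - (q.1 : ℕ)) := by
    have h2 : ∀ j, k + 1 - weight (f j) =
        ∑ q : Mono n k, if f j = some q then k + 1 - (q.1 : ℕ) else 0 := by
      intro j
      cases hj : f j with
      | none => simp [weight]
      | some q => simp [weight]
    simp only [h2]
    rw [Finset.sum_comm]
    refine Finset.sum_le_sum fun q _ => ?_
    by_cases hq : ∃ a, f a = some q
    · obtain ⟨a, ha⟩ := hq
      rw [Finset.sum_eq_single a]
      · simp [ha]
      · intro b _ hb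
        exact if_neg fun h => hb (hf b a q h ha)
      · simp
    · push Not at hq
      simp [hq]
  have h3 : ∑ j, (k + 1 - weight (f j)) + ∑ j, weight (f j) = m * (k + 1) := by
    rw [← Finset.sum_add_distrib]
    simp [Nat.sub_add_cancel (weight_le _)]
  have h4 := sum_codegree hn k
  obtain ⟨d, rfl⟩ := Nat.exists_eq_add_of_le hk1
  rw [Nat.add_sub_cancel_left]
  nlinarith

/-! ### Determinants with rows of prescribed size -/

lemma abs_det_le_of_rows {m : ℕ} (A : Matrix (Fin m) (Fin m) ℝ) (C r : ℝ) (w : Fin m → ℕ)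
    (hA : ∀ j i, |A j i| ≤ C * r ^ w j) :
    |A.det| ≤ m.factorial * C ^ m * r ^ ∑ j, w j := by
  rw [← Matrix.det_transpose, Matrix.det_apply]
  calc _ ≤ ∑ σ : Equiv.Perm (Fin m), |Equiv.Perm.sign σ • ∏ j, A.transpose (σ j) j| :=
        Finset.abs_sum_le_sum_abs _ _
    _ ≤ ∑ σ : Equiv.Perm (Fin m), ∏ j, (C * r ^ w j) := by
        refine Finset.sum_le_sum fun σ _ => ?_
        rw [Units.smul_def, zsmul_eq_mul, abs_mul, Finset.abs_prod]
        have : |(((Equiv.Perm.sign σ : ℤˣ) : ℤ) : ℝ)| = 1 := by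
          rcases Int.units_eq_one_or (Equiv.Perm.sign σ) with h | h <;> simp [h]
        rw [this, one_mul]
        exact Finset.prod_le_prod (fun _ _ => abs_nonneg _) fun j _ => hA j _
    _ = _ := by
        simp [Finset.prod_mul_distrib, Finset.prod_pow_eq_pow_sum, Fintype.card_perm, mul_assoc]

/-! ### Taylor expansion in monomials -/

lemma abs_eval_le {n k : ℕ} (q : Mono n k) (h : Fin n → ℝ) (ρ : ℝ) (hh : ∀ s, |h s| ≤ ρ) :
    |q.eval h| ≤ ρ ^ (q.1 : ℕ) := by
  obtain ⟨l, q, hq⟩ := q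
  simp only [Mono.eval, Sym.coe_mk]
  rw [← hq]
  clear hq
  induction q using Multiset.induction_on with
  | empty => simp
  | cons a s ih =>
    rw [Multiset.map_cons, Multiset.prod_cons, abs_mul, Multiset.card_cons, pow_succ']
    exact mul_le_mul (hh a) ih (abs_nonneg _) ((abs_nonneg _).trans (hh a))

/-- The multiset of entries of a tuple of indices. -/
def tupleSym {n l : ℕ} (s : Fin l → Fin n) : Sym (Fin n) l :=
  ⟨Finset.univ.val.map s, by simp⟩

/-- The coefficient of the monomial `q` in the Taylor polynomial of `f` at `p`. It is written as a sum
over all orderings of the variables of `q`, which avoids any appeal to the symmetry of the iterated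
derivative. -/
noncomputable def taylorCoeff {n k : ℕ} (f : EuclideanSpace ℝ (Fin n) → ℝ)
    (p : EuclideanSpace ℝ (Fin n)) (q : Mono n k) : ℝ :=
  ((q.1 : ℕ).factorial : ℝ)⁻¹ * ∑ s : Fin q.1 → Fin n with tupleSym s = q.2,
    iteratedFDeriv ℝ (q.1 : ℕ) f p fun t => EuclideanSpace.single (s t) 1

lemma abs_taylorCoeff_le {n k : ℕ} (hn : 0 < n) (f : EuclideanSpace ℝ (Fin n) → ℝ)
    (p : EuclideanSpace ℝ (Fin n)) (q : Mono n k) (B : ℝ)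
    (hB : ‖iteratedFDeriv ℝ (q.1 : ℕ) f p‖ ≤ B) :
    |taylorCoeff f p q| ≤ (n : ℝ) ^ (k + 1) * B := by
  have hB0 : 0 ≤ B := (norm_nonneg _).trans hB
  have hn1 : (1 : ℝ) ≤ n := by exact_mod_cast hn
  rw [taylorCoeff, abs_mul]
  have h1 : |((q.1 : ℕ).factorial : ℝ)⁻¹| ≤ 1 := by
    rw [abs_of_nonneg (by positivity)]
    exact inv_le_one_of_one_le₀ (by exact_mod_cast Nat.factorial_pos _)
  have h2 : |∑ s : Fin q.1 → Fin n with tupleSym s = q.2,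
      iteratedFDeriv ℝ (q.1 : ℕ) f p fun t => EuclideanSpace.single (s t) 1|
      ≤ (n : ℝ) ^ (k + 1) * B := by
    calc _ ≤ ∑ s : Fin q.1 → Fin n with tupleSym s = q.2, B := by
          refine (Finset.abs_sum_le_sum_abs _ _).trans (Finset.sum_le_sum fun s _ => ?_)
          have := (iteratedFDeriv ℝ (q.1 : ℕ) f p).le_opNorm
            fun t => EuclideanSpace.single (s t) (1 : ℝ)
          simp at this
          exact this.trans hB
      _ ≤ ∑ s : Fin q.1 → Fin n, B :=
          Finset.sum_le_sum_of_subset_of_nonneg (Finset.filter_subset _ _) fun _ _ _ => hB0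
      _ = (n : ℝ) ^ (q.1 : ℕ) * B := by simp
      _ ≤ _ := by
          gcongr
          exact q.1.2.le
  calc _ ≤ 1 * ((n : ℝ) ^ (k + 1) * B) := mul_le_mul h1 h2 (abs_nonneg _) zero_le_one
    _ = _ := one_mul _

lemma sum_taylorCoeff {n k : ℕ} (f : EuclideanSpace ℝ (Fin n) → ℝ)
    (p h : EuclideanSpace ℝ (Fin n)) :
    ∑ q : Mono n k, q.eval h * taylorCoeff f p q =
      ∑ l ∈ Finset.range (k + 1), (l.factorial : ℝ)⁻¹ • iteratedFDeriv ℝ l f p fun _ => h := by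
  rw [Fintype.sum_sigma,
    ← Fin.sum_univ_eq_sum_range (fun l => (l.factorial : ℝ)⁻¹ • iteratedFDeriv ℝ l f p fun _ => h)]
  refine Finset.sum_congr rfl fun l _ => ?_
  have hh : h = ∑ i, h i • EuclideanSpace.single i (1 : ℝ) := by
    ext i
    simp [Finset.sum_apply, Pi.single_apply]
  conv_rhs => rw [hh]
  have key := (iteratedFDeriv ℝ (l : ℕ) f p).toMultilinearMap.map_sum
    (fun _ i => h i • EuclideanSpace.single i (1 : ℝ))
  simp only [ContinuousMultilinearMap.coe_coe] at key
  rw [key, ← Finset.sum_fiberwise (s := Finset.univ) (g := tupleSym), Finset.smul_sum]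
  refine Finset.sum_congr rfl fun q _ => ?_
  simp only [taylorCoeff, smul_eq_mul]
  rw [mul_left_comm, Finset.mul_sum]
  congr 1
  refine Finset.sum_congr rfl fun s hs => ?_
  have hs' : tupleSym s = q := (Finset.mem_filter.mp hs).2
  rw [ContinuousMultilinearMap.map_smul_univ, smul_eq_mul, ← hs']
  congr 1
  simp [Mono.eval, tupleSym, ← List.prod_ofFn, Function.comp_def]

lemma taylor_remainder_le {n k : ℕ} (f : EuclideanSpace ℝ (Fin n) → ℝ)
    (hf : ContDiff ℝ (⊤ : ℕ∞) f) (B : ℝ)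
    (hB : ∀ x : EuclideanSpace ℝ (Fin n), (∀ s, x s ∈ Icc (-1:ℝ) 1) →
      ‖iteratedFDeriv ℝ (k + 1) f x‖ ≤ B)
    (p z : EuclideanSpace ℝ (Fin n)) (hp : ∀ s, p s ∈ Icc (-1:ℝ) 1)
    (hz : ∀ s, z s ∈ Icc (-1:ℝ) 1) :
    |f z - ∑ q : Mono n k, q.eval (z - p) * taylorCoeff f p q| ≤ B * ‖z - p‖ ^ (k + 1) := by
  have hB0 : 0 ≤ B := (norm_nonneg _).trans (hB p hp)
  have ht := map_add_eq_sum_add_integral_iteratedFDeriv (f := f) (x := p) (y := z - p) (n := k)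
    fun t _ => (hf.of_le (by exact_mod_cast le_top)).contDiffAt
  rw [add_sub_cancel] at ht
  have hs := sum_taylorCoeff (k := k) f p (z - p)
  rw [WithLp.ofLp_sub] at hs
  rw [hs, ht, add_sub_cancel_left, smul_eq_mul, abs_mul]
  have h1 : |(k.factorial : ℝ)⁻¹| ≤ 1 := by
    rw [abs_of_nonneg (by positivity)]
    exact inv_le_one_of_one_le₀ (by exact_mod_cast Nat.factorial_pos _)
  have h2 : ‖∫ t in (0 : ℝ)..1, (1 - t) ^ k •
      iteratedFDeriv ℝ (k + 1) f (p + t • (z - p)) fun _ => z - p‖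
      ≤ B * ‖z - p‖ ^ (k + 1) * |1 - 0| := by
    refine intervalIntegral.norm_integral_le_of_norm_le_const fun t ht => ?_
    rw [uIoc_of_le zero_le_one] at ht
    have hc : ∀ s, (p + t • (z - p)) s ∈ Icc (-1:ℝ) 1 := by
      intro s
      have := (convex_Icc (-1:ℝ) 1).add_smul_sub_mem (hp s) (hz s) ⟨ht.1.le, ht.2⟩
      simpa using this
    have h3 := (iteratedFDeriv ℝ (k + 1) f (p + t • (z - p))).le_opNorm fun _ => z - p
    simp only [Finset.prod_const, Finset.card_univ, Fintype.card_fin] at h3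
    rw [norm_smul, norm_pow]
    have h4 : ‖1 - t‖ ^ k ≤ 1 := by
      refine pow_le_one₀ (norm_nonneg _) ?_
      rw [Real.norm_eq_abs, abs_le]
      constructor <;> linarith [ht.1, ht.2]
    calc _ ≤ 1 * (B * ‖z - p‖ ^ (k + 1)) := by
          refine mul_le_mul h4 (h3.trans ?_) (norm_nonneg _) zero_le_one
          gcongr
          exact hB _ hc
      _ = _ := one_mul _
  calc _ ≤ 1 * (B * ‖z - p‖ ^ (k + 1)) := by
        refine mul_le_mul h1 ?_ (abs_nonneg _) zero_le_one
        simpa using h2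
    _ = _ := one_mul _

/-! ### The determinant estimate -/

/-- Bombieri–Pila determinant lemma: with `D_n(l) = C(n+l,n)`, `L_n(l) = C(n+l-1,n-1)`, `k` the
unique integer with `D_n(k) ≤ m < D_n(k+1)`, and
`e = Σ_{l=0}^{k} l·L_n(l) + (k+1)(m - D_n(k))`, there is a constant `c = c(n,m)` so that for any
smooth `φ : [-1,1]ⁿ → ℝᵐ` whose partial derivatives of order `≤ k+1` are bounded by `B ≥ 1` on
the cube, any `0 < r < 1`, and any points `z¹,…,zᵐ` of the cube lying in a closed Euclidean ball
of radius `r`, the determinant `Δ = det(φᵢ(zʲ))` satisfies `|Δ| ≤ c·Bᵐ·rᵉ`. -/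
theorem stmt7 (n m : ℕ) (hn : 0 < n) (hm : 0 < m) (k e : ℕ)
    (hk1 : (n + k).choose n ≤ m) (hk2 : m < (n + (k + 1)).choose n)
    (he : e = (∑ l ∈ Finset.range (k + 1), l * (n + l - 1).choose (n - 1)) +
      (k + 1) * (m - (n + k).choose n)) :
    ∃ c : ℝ, 0 < c ∧
      ∀ φ : EuclideanSpace ℝ (Fin n) → Fin m → ℝ,
        ContDiff ℝ (⊤ : ℕ∞) φ →
        ∀ B : ℝ, 1 ≤ B →
          (∀ (i : Fin m) (j : ℕ), j ≤ k + 1 →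
            ∀ x : EuclideanSpace ℝ (Fin n), (∀ s, x s ∈ Icc (-1:ℝ) 1) →
              ‖iteratedFDeriv ℝ j (fun y => φ y i) x‖ ≤ B) →
          ∀ r : ℝ, 0 < r → r < 1 →
            ∀ x₀ : EuclideanSpace ℝ (Fin n), ∀ z : Fin m → EuclideanSpace ℝ (Fin n),
              (∀ j, (∀ s, z j s ∈ Icc (-1:ℝ) 1) ∧ z j ∈ Metric.closedBall x₀ r) →
              |(Matrix.of fun i j => φ (z j) i).det| ≤ c * B ^ m * r ^ e := by
  -- `K * B` bounds, up to the power of `r`, every entry of the expanded rows: the factor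
  -- `2 ^ (k + 1)` comes from the distances `≤ 2 * r`, the power of `n` from the Taylor coefficients
  set K : ℝ := 2 ^ (k + 1) * (n : ℝ) ^ (k + 1) with hK
  have hn0 : (0 : ℝ) < n := by exact_mod_cast hn
  have hn1 : (1 : ℝ) ≤ n := by exact_mod_cast hn
  have hK0 : 0 < K := by positivity
  refine ⟨Fintype.card (Fin m → Option (Mono n k)) * (m.factorial * K ^ m), by positivity, ?_⟩
  intro φ hφ B hB1 hB r hr0 hr1 x₀ z hz
  have hB0 : 0 < B := by linarith
  -- any point of the configuration serves as the centre of the Taylor expansion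
  set p := z ⟨0, hm⟩ with hp
  have hφi : ∀ i, ContDiff ℝ (⊤ : ℕ∞) fun y => φ y i := fun i => (contDiff_pi.mp hφ) i
  have hdist : ∀ j, ‖z j - p‖ ≤ 2 * r := by
    intro j
    rw [← dist_eq_norm]
    have h1 := Metric.mem_closedBall.mp (hz j).2
    have h2 := Metric.mem_closedBall.mp (hz ⟨0, hm⟩).2
    linarith [dist_triangle_right (z j) p x₀]
  have hcoord : ∀ j s, |(z j - p) s| ≤ 2 * r := fun j s =>
    (PiLp.norm_apply_le (z j - p) s).trans (hdist j)
  -- row `j` is the sum over `o` of `c j o • v j o`, where `v j (some q)` is independent of `j`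
  let c : Fin m → Option (Mono n k) → ℝ := fun j o => o.elim 1 fun q => q.eval (z j - p)
  let v : Fin m → Option (Mono n k) → Fin m → ℝ := fun j o i =>
    o.elim (φ (z j) i - ∑ q : Mono n k, q.eval (z j - p) * taylorCoeff (fun y => φ y i) p q)
      fun q => taylorCoeff (fun y => φ y i) p q
  have hexp : (Matrix.of fun i j => φ (z j) i).transpose =
      fun j => ∑ o, c j o • v j o := by
    funext j i
    simp [Matrix.transpose_apply, Fintype.sum_option, c, v, Finset.sum_apply]
  have hdet : (Matrix.of fun i j => φ (z j) i).det =
      ∑ f : Fin m → Option (Mono n k), Matrix.det (fun j => c j (f j) • v j (f j)) := by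
    rw [← Matrix.det_transpose, hexp]
    exact (Matrix.detRowAlternating (R := ℝ) (n := Fin m)).toMultilinearMap.map_sum
      fun j o => c j o • v j o
  have hterm : ∀ f : Fin m → Option (Mono n k),
      |Matrix.det (fun j => c j (f j) • v j (f j))| ≤ m.factorial * K ^ m * B ^ m * r ^ e := by
    intro f
    by_cases hf : ∀ a b q, f a = some q → f b = some q → a = b
    · have h1 := abs_det_le_of_rows (fun j => c j (f j) • v j (f j)) (K * B) r
        (fun j => weight (f j)) (by
          intro j i
          cases hj : f j with
          | none =>
            simp only [c, v, weight, Option.elim, one_smul]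
            refine (taylor_remainder_le (fun y => φ y i) (hφi i) B (hB i (k + 1) le_rfl) p (z j)
              (hz _).1 (hz j).1).trans ?_
            calc B * ‖z j - p‖ ^ (k + 1) ≤ B * (2 * r) ^ (k + 1) := by
                  gcongr
                  exact hdist j
              _ = 2 ^ (k + 1) * 1 * B * r ^ (k + 1) := by ring
              _ ≤ K * B * r ^ (k + 1) := by
                  rw [hK]
                  gcongr
                  exact one_le_pow₀ hn1
          | some q =>
            simp only [c, v, weight, Option.elim, Pi.smul_apply, smul_eq_mul, abs_mul]
            have h2 := abs_eval_le q (z j - p) (2 * r) (hcoord j)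
            have h3 := abs_taylorCoeff_le hn (fun y => φ y i) p q B
              (hB i q.1 q.1.2.le p (hz _).1)
            calc _ ≤ (2 * r) ^ (q.1 : ℕ) * ((n : ℝ) ^ (k + 1) * B) :=
                  mul_le_mul h2 h3 (abs_nonneg _) (by positivity)
              _ = 2 ^ (q.1 : ℕ) * (n : ℝ) ^ (k + 1) * B * r ^ (q.1 : ℕ) := by ring
              _ ≤ K * B * r ^ (q.1 : ℕ) := by
                  rw [hK]
                  gcongr
                  · norm_num
                  · exact q.1.2.le)
      refine h1.trans ?_
      rw [mul_pow, ← mul_assoc]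
      refine mul_le_mul_of_nonneg_left ?_ (by positivity)
      refine pow_le_pow_of_le_one hr0.le hr1.le ?_
      rw [he]
      exact le_sum_weight hn hk1 f hf
    · push Not at hf
      obtain ⟨a, b, q, ha, hb, hab⟩ := hf
      have h0 : Matrix.det (fun j => c j (f j) • v j (f j)) = 0 := by
        have h1 := Matrix.det_mul_column (fun j => c j (f j)) (Matrix.of fun j => v j (f j))
        have h2 : (Matrix.of fun j => v j (f j)).det = 0 := by
          refine Matrix.det_zero_of_row_eq hab ?_
          funext i
          simp [v, ha, hb]
        rw [h2, mul_zero] at h1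
        exact h1
      rw [h0, abs_zero]
      positivity
  rw [hdet]
  calc _ ≤ ∑ f : Fin m → Option (Mono n k), m.factorial * K ^ m * B ^ m * r ^ e :=
        (Finset.abs_sum_le_sum_abs _ _).trans (Finset.sum_le_sum fun f _ => hterm f)
    _ = _ := by
        rw [Finset.sum_const, Finset.card_univ, nsmul_eq_mul]
        ring
end

section
/- Let P be a real polynomial of degree d, and let Z ⊆ [−1,1] be a Lebesgue-measurable set of Lebesgue measure μ > 0. Then sup_{x ∈ [−1,1]} |P(x)| ≤ T_d((4−μ)/μ) · sup_{x ∈ Z} |P(x)|, where T_d is the degree-d Chebyshev polynomial of the first kind, characterized by T_d(cos θ) = cos(dθ). -/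
/-!
The extremal role of `T_d` is exploited through Lagrange interpolation at a measure-theoretic
transport of the Chebyshev nodes `t_i = cos (i π / d)`.

Fix `x ∈ [-1,1]`. The point `x` splits `[-1,1]` into two intervals, and in one of them, of length
`L > 0` say, the (closed) set `Z` has density at least `μ / 2`; by reflection this may be taken to
be `[-1, x]`. The function `y ↦ |Z ∩ (-∞, y]|` is monotone and `1`-Lipschitz and takes each of its
values at a point of `Z` (`exists_mem_cdf_eq`), so there are `y_i ∈ Z` at which it equals
`c (1 + t_i)` with `c = L μ / 4`. Being `1`-Lipschitz forces `|y_i - y_j| ≥ c |t_i - t_j|` and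
`|x - y_j| ≤ c (τ - t_j)` with `τ = (4 - μ) / μ`. Hence each Lagrange basis polynomial of the nodes
`y_i`, evaluated at `x`, is bounded by the absolute value of the corresponding one of the nodes
`t_i`, evaluated at `τ`. Since `T_d (t_i) = (-1)^i` matches the signs of the latter, these absolute
values add up to exactly `T_d (τ)` (`abs_eval_le_of_points`).
-/

open Set

namespace Remez

open MeasureTheory Polynomial Polynomial.Chebyshev

/-- The length of the part of `K` lying to the left of `y`. -/
noncomputable def cdf (K : Set ℝ) (y : ℝ) : ℝ := volume.real (K ∩ Iic y)

lemma cdf_mono {K : Set ℝ} (hK : volume K ≠ ⊤) : Monotone (cdf K) := fun _ _ h =>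
  measureReal_mono (inter_subset_inter_right _ (Iic_subset_Iic.2 h))
    (measure_ne_top_of_subset inter_subset_left hK)

lemma cdf_le_add {K : Set ℝ} (hK : volume K ≠ ⊤) {u v : ℝ} (h : u ≤ v) :
    cdf K v ≤ cdf K u + (v - u) := by
  have hsub : K ∩ Iic v ⊆ (K ∩ Iic u) ∪ Ioc u v := by
    rintro z ⟨hz, hzv⟩
    rcases le_or_gt z u with hzu | hzu
    · exact Or.inl ⟨hz, hzu⟩
    · exact Or.inr ⟨hzu, hzv⟩
  calc cdf K v ≤ volume.real ((K ∩ Iic u) ∪ Ioc u v) :=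
        measureReal_mono hsub (measure_union_ne_top
          (measure_ne_top_of_subset inter_subset_left hK) (by simp))
    _ ≤ volume.real (K ∩ Iic u) + volume.real (Ioc u v) := measureReal_union_le _ _
    _ = cdf K u + (v - u) := by rw [Real.volume_real_Ioc_of_le h]; rfl

lemma abs_cdf_sub_le {K : Set ℝ} (hK : volume K ≠ ⊤) (u v : ℝ) :
    |cdf K u - cdf K v| ≤ |u - v| := by
  wlog h : u ≤ v
  · rw [abs_sub_comm, abs_sub_comm u]
    exact this hK v u (le_of_not_ge h)
  have h1 := cdf_le_add hK h
  have h2 := cdf_mono hK h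
  rw [abs_of_nonpos (by linarith), abs_of_nonpos (by linarith)]
  linarith

lemma continuous_cdf {K : Set ℝ} (hK : volume K ≠ ⊤) : Continuous (cdf K) :=
  (LipschitzWith.of_dist_le_mul (K := 1) fun u v => by
    simpa [Real.dist_eq] using abs_cdf_sub_le hK u v).continuous

/-- The distribution function of a compact set takes all its values at points of the set: move an
intermediate-value point to the left until it meets `K`. -/
lemma exists_mem_cdf_eq {K : Set ℝ} {a b s : ℝ} (hK : IsClosed K) (hab : K ⊆ Icc a b)
    (hne : K.Nonempty) (hs0 : 0 ≤ s) (hs : s ≤ volume.real K) : ∃ y ∈ K, cdf K y = s := by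
  have hfin : volume K ≠ ⊤ := measure_ne_top_of_subset hab (by simp)
  have hle : a ≤ b := by
    obtain ⟨k, hk⟩ := hne
    exact (hab hk).1.trans (hab hk).2
  have hpt : ∀ y, (∀ k ∈ K, y ≤ k) → cdf K y = 0 := by
    intro y hy
    have : K ∩ Iic y ⊆ {y} := fun k hk => le_antisymm hk.2 (hy k hk.1)
    exact (measureReal_mono this (by simp)).trans (by simp [measureReal_def])
      |>.antisymm measureReal_nonneg
  have hcomp : IsCompact K := isCompact_Icc.of_isClosed_subset hK hab
  have ha : cdf K a = 0 := hpt a fun k hk => (hab hk).1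
  have hb : cdf K b = volume.real K := by
    rw [cdf, inter_eq_left.2 (show K ⊆ Iic b from fun k hk => (hab hk).2)]
  obtain ⟨z, -, hz⟩ := intermediate_value_Icc hle (continuous_cdf hfin).continuousOn
    (show s ∈ Icc (cdf K a) (cdf K b) by rw [ha, hb]; exact ⟨hs0, hs⟩)
  rcases (K ∩ Iic z).eq_empty_or_nonempty with he | hn
  · refine ⟨sInf K, hcomp.sInf_mem hne, ?_⟩
    rw [hpt _ fun k hk => csInf_le hcomp.bddBelow hk, ← hz, cdf, he]
    simp
  · have hmem := (hcomp.inter_right isClosed_Iic).sSup_mem hn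
    refine ⟨_, hmem.1, ?_⟩
    rw [← hz, cdf, cdf]
    congr 1
    ext k
    constructor
    · exact fun hk => ⟨hk.1, mem_Iic.2 (le_trans (mem_Iic.1 hk.2) (mem_Iic.1 hmem.2))⟩
    · exact fun hk => ⟨hk.1, le_csSup (hcomp.inter_right isClosed_Iic).bddAbove hk⟩

lemma eval_eq_sum {d : ℕ} {P : ℝ[X]} (hP : P.natDegree ≤ d) {y : ℕ → ℝ}
    (hy : Set.InjOn y (Finset.range (d + 1))) (x : ℝ) :
    P.eval x = ∑ i ∈ Finset.range (d + 1), P.eval (y i) *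
      ∏ j ∈ (Finset.range (d + 1)).erase i, ((y i - y j)⁻¹ * (x - y j)) := by
  have hdeg : P.degree < (Finset.range (d + 1)).card := by
    rw [Finset.card_range]
    exact lt_of_le_of_lt (degree_le_of_natDegree_le hP) (by exact_mod_cast Nat.lt_succ_self d)
  conv_lhs => rw [Lagrange.eq_interpolate hy hdeg]
  simp [Lagrange.interpolate_apply, eval_finsetSum, Lagrange.basis, Lagrange.basisDivisor,
    eval_prod]

/-- Comparison of two Lagrange interpolation formulas: if the nodes `y_i` are at least as spread out
as `c` times the Chebyshev nodes, while `x` is at most as far from each of them as `c` times the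
distance of the corresponding Chebyshev node to `τ ≥ 1`, then `T_d (τ)` bounds the growth at `x`. -/
lemma abs_eval_le_of_points {d : ℕ} {P : ℝ[X]} (hP : P.natDegree ≤ d) {y : ℕ → ℝ} {x c τ M : ℝ}
    (hc : 0 < c) (hτ : 1 ≤ τ) (hM : ∀ i ≤ d, |P.eval (y i)| ≤ M)
    (hsep : ∀ i ≤ d, ∀ j ≤ d, c * |node d i - node d j| ≤ |y i - y j|)
    (hdist : ∀ j ≤ d, |x - y j| ≤ c * (τ - node d j)) :
    |P.eval x| ≤ (T ℝ d).eval τ * M := by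
  have hnode : Set.InjOn (node d) (Finset.range (d + 1)) := (strictAntiOn_node d).injOn
  have hpos : ∀ i ≤ d, ∀ j ≤ d, j ≠ i → 0 < |node d i - node d j| := fun i hi j hj hij =>
    abs_pos.2 (sub_ne_zero.2 fun h => hij (hnode (by simp; omega) (by simp; omega) h).symm)
  have hy : Set.InjOn y (Finset.range (d + 1)) := by
    intro i hi j hj h
    by_contra hne
    simp only [Finset.coe_range, mem_Iio] at hi hj
    have h1 := hsep i (by omega) j (by omega)
    have h2 := hpos i (by omega) j (by omega) (Ne.symm hne)
    rw [h, sub_self, abs_zero] at h1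
    nlinarith
  have hTdeg : (T ℝ d).natDegree ≤ d := by simp
  rw [eval_eq_sum hTdeg hnode τ, eval_eq_sum hP hy x, Finset.sum_mul]
  refine (Finset.abs_sum_le_sum_abs _ _).trans (Finset.sum_le_sum fun i hi => ?_)
  have hi' : i ≤ d := by simpa [Nat.lt_succ_iff] using hi
  have hTsign : (T ℝ d).eval (node d i) *
      ∏ j ∈ (Finset.range (d + 1)).erase i, ((node d i - node d j)⁻¹ * (τ - node d j)) =
      ∏ j ∈ (Finset.range (d + 1)).erase i, (|node d i - node d j|⁻¹ * (τ - node d j)) := by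
    rw [eval_T_real_node (by simpa using hi'), Finset.prod_mul_distrib, Finset.prod_mul_distrib,
      Finset.prod_inv_distrib, Finset.prod_inv_distrib, ← Finset.abs_prod, ← mul_assoc]
    congr 1
    have h0 := zero_lt_prod_node_sub_node hi'
    rcases neg_one_pow_eq_or ℝ i with h | h <;> rw [h] at h0 ⊢
    · rw [abs_of_pos (by linarith)]; ring
    · rw [abs_of_neg (by linarith), inv_neg]; ring
  rw [hTsign, abs_mul, mul_comm, Finset.abs_prod]
  refine mul_le_mul (Finset.prod_le_prod (fun _ _ => abs_nonneg _) fun j hj => ?_) (hM i hi')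
    (abs_nonneg _) (Finset.prod_nonneg fun j _ => mul_nonneg (by positivity)
      (by have := (node_mem_Icc (n := d) (i := j)).2; linarith))
  obtain ⟨hji, hj⟩ := Finset.mem_erase.1 hj
  have hj' : j ≤ d := by simpa [Nat.lt_succ_iff] using hj
  have h1 := hpos i hi' j hj' hji
  have hcs : 0 < c * |node d i - node d j| := by positivity
  rw [abs_mul, abs_inv]
  calc |y i - y j|⁻¹ * |x - y j|
      ≤ (c * |node d i - node d j|)⁻¹ * (c * (τ - node d j)) :=
        mul_le_mul (inv_anti₀ hcs (hsep i hi' j hj')) (hdist j hj') (abs_nonneg _) (by positivity)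
    _ = |node d i - node d j|⁻¹ * (τ - node d j) := by
        field_simp

/-- The bound at the right endpoint of an interval `[a, x]` in which `K` has density at least
`μ / 2`. -/
lemma endpoint_bound {d : ℕ} {P : ℝ[X]} (hP : P.natDegree ≤ d) {K : Set ℝ} {a x μ M : ℝ}
    (hK : IsClosed K) (hax : a < x) (hμ : 0 < μ) (hμ2 : μ ≤ 2)
    (hdens : (x - a) * μ / 2 ≤ volume.real (K ∩ Icc a x)) (hM : ∀ y ∈ K, |P.eval y| ≤ M) :
    |P.eval x| ≤ (T ℝ d).eval ((4 - μ) / μ) * M := by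
  set S := K ∩ Icc a x with hS
  have hL : 0 < (x - a) * μ := mul_pos (by linarith) hμ
  have hSne : S.Nonempty := by
    by_contra h
    rw [not_nonempty_iff_eq_empty] at h
    rw [h, measureReal_empty] at hdens
    linarith
  have hSsub : S ⊆ Icc a x := inter_subset_right
  have hfin : volume S ≠ ⊤ := measure_ne_top_of_subset hSsub (by simp)
  have hex : ∀ i : ℕ, ∃ y ∈ S, cdf S y = (x - a) * μ / 4 * (1 + node d i) := fun i => by
    have ht := node_mem_Icc (n := d) (i := i)
    refine exists_mem_cdf_eq (hK.inter isClosed_Icc) hSsub hSne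
      (mul_nonneg (by linarith) (by linarith [ht.1])) (le_trans ?_ hdens)
    nlinarith [ht.2]
  choose y hyS hy using hex
  have hcdfa : cdf S a ≤ 0 := by
    have : S ∩ Iic a ⊆ {a} := fun k hk => le_antisymm hk.2 (hSsub hk.1).1
    exact (measureReal_mono this (by simp)).trans (by simp [measureReal_def])
  refine abs_eval_le_of_points hP (y := y) (c := (x - a) * μ / 4) (by linarith)
    ((one_le_div hμ).2 (by linarith)) (fun i _ => hM _ (hyS i).1) (fun i _ j _ => ?_)
    (fun j _ => ?_)
  · refine le_trans (le_of_eq ?_) (abs_cdf_sub_le hfin (y i) (y j))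
    rw [hy, hy, ← mul_sub, abs_mul, abs_of_pos (by linarith : 0 < (x - a) * μ / 4)]
    congr 2
    ring
  · have h1 := hSsub (hyS j)
    have h2 := cdf_le_add hfin h1.1
    rw [hy] at h2
    rw [abs_of_nonneg (by linarith [h1.2])]
    have : (x - a) * μ / 4 * ((4 - μ) / μ - node d j) =
        (x - a) - (x - a) * μ / 4 * (1 + node d j) := by
      field_simp
      ring
    linarith

end Remez

/-- The classical Remez inequality: for a real polynomial `P` of degree at most `d` and a
measurable set `Z ⊆ [-1,1]` of Lebesgue measure `μ > 0`,
`max_{[-1,1]} |P| ≤ T_d((4-μ)/μ) · sup_Z |P|`, where `T_d` is the Chebyshev polynomial. -/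
theorem stmt11 (d : ℕ) (P : Polynomial ℝ) (hP : P.natDegree ≤ d)
    (Z : Set ℝ) (hZmeas : MeasurableSet Z) (hZsub : Z ⊆ Icc (-1) 1)
    (μ : ℝ) (hμ : μ = (MeasureTheory.volume Z).toReal) (hμpos : 0 < μ) :
    ∀ x ∈ Icc (-1:ℝ) 1,
      |P.eval x| ≤ (Polynomial.Chebyshev.T ℝ d).eval ((4 - μ) / μ) *
        sSup ((fun y => |P.eval y|) '' Z) := by
  intro x hx
  have hcont : Continuous fun y => |P.eval y| := P.continuous.abs
  set M := sSup ((fun y => |P.eval y|) '' Z)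
  have hbdd : BddAbove ((fun y => |P.eval y|) '' Z) :=
    (isCompact_Icc.bddAbove_image hcont.continuousOn).mono (image_mono hZsub)
  -- Passing to the closure changes neither the supremum nor, unfavourably, the measure.
  have hM : ∀ y ∈ closure Z, |P.eval y| ≤ M :=
    closure_minimal (t := {y | |P.eval y| ≤ M}) (fun y hy => le_csSup hbdd ⟨y, hy, rfl⟩)
      (isClosed_le hcont continuous_const)
  set K := closure Z
  have hKsub : K ⊆ Icc (-1) 1 := closure_minimal hZsub isClosed_Icc
  have hKfin : MeasureTheory.volume K ≠ ⊤ := MeasureTheory.measure_ne_top_of_subset hKsub (by simp)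
  have hμK : μ ≤ MeasureTheory.volume.real K :=
    hμ.le.trans (MeasureTheory.measureReal_mono subset_closure hKfin)
  have hμ2 : μ ≤ 2 := by
    refine hμK.trans ((MeasureTheory.measureReal_mono hKsub (by simp)).trans ?_)
    norm_num
  have hsplit : μ ≤ MeasureTheory.volume.real (K ∩ Icc (-1) x) +
      MeasureTheory.volume.real (K ∩ Icc x 1) := by
    refine hμK.trans (le_trans (le_of_eq ?_) (MeasureTheory.measureReal_union_le _ _))
    rw [← inter_union_distrib_left, Icc_union_Icc_eq_Icc hx.1 hx.2, inter_eq_left.2 hKsub]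
  have hdeg : ∀ u v : ℝ, u = v → MeasureTheory.volume.real (K ∩ Icc u v) = 0 := by
    rintro u _ rfl
    exact (MeasureTheory.measureReal_mono inter_subset_right (by simp)).trans
      (by simp [MeasureTheory.measureReal_def]) |>.antisymm MeasureTheory.measureReal_nonneg
  by_cases hleft : -1 < x ∧ (x - -1) * μ / 2 ≤ MeasureTheory.volume.real (K ∩ Icc (-1) x)
  · exact Remez.endpoint_bound hP isClosed_closure hleft.1 hμpos hμ2 hleft.2 hM
  · have hright : x < 1 ∧ (1 - x) * μ / 2 ≤ MeasureTheory.volume.real (K ∩ Icc x 1) := by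
      rcases hx.1.eq_or_lt with h | h
      · have := hdeg _ _ h
        refine ⟨by linarith, ?_⟩
        have hx' : (1 - x) * μ / 2 = μ := by rw [← h]; ring
        linarith
      · have h3 := not_le.1 fun h' => hleft ⟨h, h'⟩
        refine ⟨lt_of_le_of_ne hx.2 fun h1 => ?_, by linarith⟩
        have := hdeg _ _ h1
        have hx' : (x - -1) * μ / 2 = μ := by rw [h1]; ring
        linarith
    have hpre : (-K) ∩ Icc (-1) (-x) = -(K ∩ Icc x 1) := by
      rw [Set.inter_neg]
      simp
    have key := Remez.endpoint_bound (d := d) (P := P.comp (-Polynomial.X)) (K := -K) (a := -1)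
      (x := -x) (μ := μ) (M := M) (by simpa [Polynomial.natDegree_comp] using hP)
      isClosed_closure.neg (by linarith [hright.1]) hμpos hμ2
      (by
        rw [hpre, MeasureTheory.measureReal_def, MeasureTheory.Measure.measure_neg,
          ← MeasureTheory.measureReal_def]
        linarith [hright.2])
      (fun y hy => by simpa using hM (-y) hy)
    simpa using key
end

section
/- Let 0 < ε < 1. Let Y_ε = {(x,y) ∈ [0,1]×[0,1] : x·y = ε²} and Z_ε = {(x,y) ∈ Y_ε : ε ≤ x}. Then the supremum of |y| over (x,y) ∈ Y_ε equals 1, the supremum of |y| over (x,y) ∈ Z_ε equals ε, and consequently every real number K ≥ 0 with the property that sup_{(x,y) ∈ Y_ε} |Q(x,y)| ≤ K · sup_{(x,y) ∈ Z_ε} |Q(x,y)| for every real polynomial Q in two variables of total degree at most 1, must satisfy K ≥ 1/ε. -/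
/-!
Both suprema of `|y|` are maxima: on `hypY ε` the bound `y ≤ 1` is attained at `(ε², 1)`, and on
`hypZ ε` the bound `y = ε² / x ≤ ε` is attained at `(ε, ε)`. Testing the Remez inequality on the
linear polynomial `Q(x, y) = y` then gives `1 ≤ K * ε`.
-/

open Set

/-- The piece of the hyperbola `x·y = ε²` inside the unit square `[0,1]×[0,1]`. -/
def hypY (ε : ℝ) : Set (ℝ × ℝ) :=
  {p : ℝ × ℝ | p.1 ∈ Icc (0:ℝ) 1 ∧ p.2 ∈ Icc (0:ℝ) 1 ∧ p.1 * p.2 = ε ^ 2}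

/-- The half-branch of `hypY ε` with `ε ≤ x`. -/
def hypZ (ε : ℝ) : Set (ℝ × ℝ) :=
  {p ∈ hypY ε | ε ≤ p.1}

/-- On the hyperbola `Y_ε = {xy = ε²} ∩ [0,1]²` with half-branch `Z_ε = {ε ≤ x}`: the supremum
of `|y|` on `Y_ε` is `1`, on `Z_ε` it is `ε`, and consequently any Remez constant `K ≥ 0` valid
for all polynomials of total degree at most `1` satisfies `K ≥ 1/ε`. -/
theorem stmt12 (ε : ℝ) (hε0 : 0 < ε) (hε1 : ε < 1) :
    sSup ((fun p : ℝ × ℝ => |p.2|) '' hypY ε) = 1 ∧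
    sSup ((fun p : ℝ × ℝ => |p.2|) '' hypZ ε) = ε ∧
    ∀ K : ℝ, 0 ≤ K →
      (∀ Q : MvPolynomial (Fin 2) ℝ, Q.totalDegree ≤ 1 →
        sSup ((fun p : ℝ × ℝ => |MvPolynomial.eval ![p.1, p.2] Q|) '' hypY ε) ≤
          K * sSup ((fun p : ℝ × ℝ => |MvPolynomial.eval ![p.1, p.2] Q|) '' hypZ ε)) →
      1 / ε ≤ K := by
  have hY : sSup ((fun p : ℝ × ℝ => |p.2|) '' hypY ε) = 1 := by
    refine IsGreatest.csSup_eq ⟨⟨(ε ^ 2, 1), ⟨⟨by positivity, by nlinarith⟩, by simp, by simp⟩,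
      by simp⟩, ?_⟩
    rintro _ ⟨p, ⟨-, hy, -⟩, rfl⟩
    exact (abs_of_nonneg hy.1).trans_le hy.2
  have hZ : sSup ((fun p : ℝ × ℝ => |p.2|) '' hypZ ε) = ε := by
    refine IsGreatest.csSup_eq ⟨⟨(ε, ε), ⟨⟨⟨hε0.le, hε1.le⟩, ⟨hε0.le, hε1.le⟩, by ring⟩, le_rfl⟩,
      abs_of_pos hε0⟩, ?_⟩
    rintro _ ⟨p, ⟨⟨-, hy, hxy⟩, hx⟩, rfl⟩
    refine (abs_of_nonneg hy.1).trans_le (le_of_mul_le_mul_left ?_ hε0)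
    calc ε * p.2 ≤ p.1 * p.2 := mul_le_mul_of_nonneg_right hx hy.1
      _ = ε * ε := by rw [hxy, sq]
  refine ⟨hY, hZ, fun K _ hK => ?_⟩
  have h := hK (MvPolynomial.X 1) (MvPolynomial.totalDegree_X _).le
  simp only [MvPolynomial.eval_X, Matrix.cons_val_one, Matrix.cons_val_fin_one] at h
  rw [hY, hZ] at h
  rwa [div_le_iff₀ hε0]
end
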